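/- arXiv:2604.21720 — 4 statements merged into one kernel-verified Lean document; each statement's English description precedes it below -/
import Mathlib

section
/- Let (S_i)_{i∈ℕ} be a sequence of non-abelian finite simple groups and let (T_i)_{i∈ℕ} be finite perfect groups with T_i/Z(T_i) ≅ S_i for each i. For n ∈ ℕ set m_n = #{i ∈ ℕ : S_i has a nontrivial irreducible complex representation of dimension at most n} and m̃_n = #{i ∈ ℕ : T_i has a nontrivial irreducible complex representation of dimension at most n}, each valued in ℕ ∪ {∞}. Then m_n is polynomially bounded in n (there exists b with m_n ≤ n^b for all n ≥ 1) if and only if m̃_n is polynomially bounded in n. -/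
/-!
The count for `S` is at most the count for `T`, because irreducible representations of `S` inflate
along `T → T / Z(T) ≅ S`.

Conversely, let `ρ` be a nontrivial irreducible representation of `T` of dimension `k ≤ n`.
By Schur's lemma `Z(T)` acts by scalars, so the conjugation action of `T` on `k × k` matrices
factors through `T / Z(T) ≅ S` and gives a representation of `S` of dimension `k ^ 2`. This is
nontrivial: otherwise every `ρ g` would be central in the matrix algebra, so `ρ` would have abelian
image, and a perfect group has no nontrivial homomorphism with abelian image. By Maschke's theorem
some irreducible constituent of dimension at most `k ^ 2 ≤ n ^ 2` is nontrivial. Hence the count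
for `T` at `n` is at most the count for `S` at `n ^ 2`, and a bound `n ^ b` becomes `n ^ (2 * b)`.
-/

open scoped MatrixGroups

/-- A matrix representation is irreducible if it admits no invariant subspace
other than `0` and the full space. -/
def MatIrreducible {G : Type*} [Group G] {n : ℕ} (ρ : G →* GL (Fin n) ℂ) : Prop :=
  ∀ W : Submodule ℂ (Fin n → ℂ),
    (∀ g : G, ∀ v ∈ W, Matrix.mulVec ((ρ g : Matrix (Fin n) (Fin n) ℂ)) v ∈ W) →
      W = ⊥ ∨ W = ⊤

/-- The group `S` has a nontrivial irreducible complex representation of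
dimension at most `n`. -/
def HasNontrivialIrrepLE (S : Type*) [Group S] (n : ℕ) : Prop :=
  ∃ k : ℕ, k ≤ n ∧ ∃ ρ : S →* GL (Fin k) ℂ, MatIrreducible ρ ∧ ρ ≠ 1

/-- Irreducibility and nontriviality are preserved by inflation along a surjection. -/
lemma HasNontrivialIrrepLE.of_surjective {G H : Type*} [Group G] [Group H] (f : G →* H)
    (hf : Function.Surjective f) {n : ℕ} (h : HasNontrivialIrrepLE H n) :
    HasNontrivialIrrepLE G n := by
  obtain ⟨k, hk, ρ, hirr, hne⟩ := h
  refine ⟨k, hk, ρ.comp f, fun W hW => hirr W fun g v hv => ?_, fun h1 => hne ?_⟩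
  · obtain ⟨x, rfl⟩ := hf g
    exact hW x v hv
  · ext1 g
    obtain ⟨x, rfl⟩ := hf g
    exact DFunLike.congr_fun h1 x

/-- A nontrivial finite-dimensional representation `σ` of a finite group has a nontrivial
irreducible constituent: a subrepresentation of least dimension among those on which the group acts
nontrivially is irreducible, by Maschke's theorem. -/
lemma hasNontrivialIrrepLE_of_representation {G V : Type*} [Group G] [Finite G] [AddCommGroup V]
    [Module ℂ V] [FiniteDimensional ℂ V] (σ : Representation ℂ G V)
    (hσ : ∃ g v, σ g v ≠ v) : HasNontrivialIrrepLE G (Module.finrank ℂ V) := by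
  classical
  have hex : ∃ d : ℕ, ∃ U : Subrepresentation σ, Module.finrank ℂ U.toSubmodule = d ∧
      ∃ g, ∃ v ∈ U.toSubmodule, σ g v ≠ v := by
    obtain ⟨g, v, hv⟩ := hσ
    exact ⟨_, ⊤, rfl, g, v, Submodule.mem_top, hv⟩
  obtain ⟨U, hUd, g₀, v₀, hv₀, hne⟩ := Nat.find_spec hex
  have hmin : ∀ W : Subrepresentation σ, W.toSubmodule ≤ U.toSubmodule →
      (∃ g, ∃ v ∈ W.toSubmodule, σ g v ≠ v) → W.toSubmodule = U.toSubmodule := by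
    intro W hWU hW
    refine Submodule.eq_of_le_of_finrank_le hWU ?_
    rw [hUd]
    exact Nat.find_min' hex ⟨W, rfl, hW⟩
  have hirr : ∀ W : Subrepresentation σ, W.toSubmodule ≤ U.toSubmodule →
      W.toSubmodule = ⊥ ∨ W.toSubmodule = U.toSubmodule := by
    intro W hWU
    by_cases hW : ∃ g, ∃ v ∈ W.toSubmodule, σ g v ≠ v
    · exact .inr (hmin W hWU hW)
    left
    push Not at hW
    obtain ⟨W', hW'⟩ := exists_isCompl W
    have hsup : W.toSubmodule ⊔ W'.toSubmodule = ⊤ :=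
      congrArg Subrepresentation.toSubmodule hW'.sup_eq_top
    have hinf : W.toSubmodule ⊓ W'.toSubmodule = ⊥ :=
      congrArg Subrepresentation.toSubmodule hW'.inf_eq_bot
    -- The vector `v₀ = a + c` is moved by `g₀`, and its component `a` in `W` is fixed.
    obtain ⟨a, ha, c, hc, hac⟩ := Submodule.mem_sup.mp (hsup ▸ Submodule.mem_top : v₀ ∈ _)
    have hcU : c ∈ U.toSubmodule := by
      have : c = v₀ - a := by rw [← hac]; abel
      rw [this]
      exact Submodule.sub_mem _ hv₀ (hWU ha)
    have hne' : σ g₀ c ≠ c := by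
      intro h
      apply hne
      rw [← hac, map_add, hW g₀ a ha, h]
    have := hmin (W' ⊓ U) inf_le_right ⟨g₀, c, ⟨hc, hcU⟩, hne'⟩
    have hUW' : U.toSubmodule ≤ W'.toSubmodule := this ▸ inf_le_left
    rw [← hinf]
    exact (inf_eq_left.mpr (hWU.trans hUW')).symm
  let b := Module.finBasis ℂ U.toSubmodule
  let τ : G →* GL (Fin (Module.finrank ℂ U.toSubmodule)) ℂ :=
    (Units.map (LinearMap.toMatrixAlgEquiv b).toMonoidHom).comp U.toRepresentation.toHomUnits
  have hτ : ∀ g (x : U.toSubmodule),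
      Matrix.mulVec (τ g : Matrix _ _ ℂ) (b.equivFun x) = b.equivFun (U.toRepresentation g x) :=
    fun g x => LinearMap.toMatrix_mulVec_repr b b _ x
  refine ⟨_, Submodule.finrank_le U.toSubmodule, τ, fun W hW => ?_, fun h1 => hne ?_⟩
  · let W₁ : Submodule ℂ U.toSubmodule := W.comap b.equivFun.toLinearMap
    have hW₁ : ∀ g, ∀ x ∈ W₁, U.toRepresentation g x ∈ W₁ := by
      intro g x hx
      change b.equivFun _ ∈ W
      rw [← hτ]
      exact hW g _ hx
    have hWW₁ : W = W₁.map b.equivFun.toLinearMap :=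
      (Submodule.map_comap_eq_of_surjective b.equivFun.surjective W).symm
    let W₂ : Subrepresentation σ :=
      { toSubmodule := W₁.map U.toSubmodule.subtype
        apply_mem_toSubmodule := by
          rintro g _ ⟨x, hx, rfl⟩
          exact ⟨_, hW₁ g x hx, rfl⟩ }
    rcases hirr W₂ (Submodule.map_subtype_le _ _) with h | h
    · left
      have : W₁ = ⊥ := by
        apply Submodule.map_injective_of_injective U.toSubmodule.subtype_injective
        rw [Submodule.map_bot]
        exact h
      rw [hWW₁, this, Submodule.map_bot]
    · right
      have : W₁ = ⊤ := by
        apply Submodule.map_injective_of_injective U.toSubmodule.subtype_injective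
        rw [Submodule.map_subtype_top]
        exact h
      rw [hWW₁, this, Submodule.map_top, LinearMap.range_eq_top]
      exact b.equivFun.surjective
  · have h := hτ g₀ ⟨v₀, hv₀⟩
    rw [h1, MonoidHom.one_apply, Units.val_one, Matrix.one_mulVec] at h
    exact (congrArg Subtype.val (b.equivFun.injective h)).symm

/-- The action of `G` on `k × k` matrices by conjugation through `ρ`, which is `ρ ⊗ ρ^*`. -/
def conjRep {G : Type*} [Group G] {k : ℕ} (ρ : G →* GL (Fin k) ℂ) :
    Representation ℂ G (Matrix (Fin k) (Fin k) ℂ) where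
  toFun g := LinearMap.mulLeft ℂ (ρ g : Matrix (Fin k) (Fin k) ℂ) *
    LinearMap.mulRight ℂ (ρ g⁻¹ : Matrix (Fin k) (Fin k) ℂ)
  map_one' := by ext1 A; simp
  map_mul' g h := by
    apply LinearMap.ext
    intro A
    simp [mul_assoc]

lemma conjRep_eq_self_iff {G : Type*} [Group G] {k : ℕ} (ρ : G →* GL (Fin k) ℂ) (g : G)
    (A : Matrix (Fin k) (Fin k) ℂ) :
    conjRep ρ g A = A ↔ (ρ g : Matrix (Fin k) (Fin k) ℂ) * A = A * ρ g := by
  change (ρ g : Matrix (Fin k) (Fin k) ℂ) * (A * (ρ g⁻¹ : GL (Fin k) ℂ)) = A ↔ _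
  rw [← mul_assoc, map_inv, Units.mul_inv_eq_iff_eq_mul]

/-- Schur's lemma: a central element acts by a scalar. -/
lemma MatIrreducible.exists_eq_scalar {G : Type*} [Group G] {k : ℕ} [NeZero k]
    {ρ : G →* GL (Fin k) ℂ} (hρ : MatIrreducible ρ) {z : G} (hz : z ∈ Subgroup.center G) :
    ∃ c : ℂ, ∀ v, Matrix.mulVec (ρ z : Matrix (Fin k) (Fin k) ℂ) v = c • v := by
  obtain ⟨c, hc⟩ := Module.End.exists_eigenvalue
    (Matrix.toLin' (ρ z : Matrix (Fin k) (Fin k) ℂ))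
  refine ⟨c, fun v => ?_⟩
  have h := hρ (Module.End.eigenspace (Matrix.toLin' (ρ z : Matrix (Fin k) (Fin k) ℂ)) c) ?_
  · have htop := h.resolve_left hc
    have hv : v ∈ Module.End.eigenspace
        (Matrix.toLin' (ρ z : Matrix (Fin k) (Fin k) ℂ)) c := htop ▸ Submodule.mem_top
    simpa [Module.End.mem_eigenspace_iff] using hv
  · intro g v hv
    rw [Module.End.mem_eigenspace_iff, Matrix.toLin'_apply] at hv ⊢
    rw [Matrix.mulVec_mulVec, ← Units.val_mul, ← map_mul,
      ← Subgroup.mem_center_iff.mp hz g, map_mul, Units.val_mul, ← Matrix.mulVec_mulVec, hv,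
      Matrix.mulVec_smul]

lemma MatIrreducible.conjRep_center {G : Type*} [Group G] {k : ℕ}
    {ρ : G →* GL (Fin k) ℂ} (hρ : MatIrreducible ρ) {z : G} (hz : z ∈ Subgroup.center G) :
    conjRep ρ z = 1 := by
  apply LinearMap.ext
  intro A
  refine (conjRep_eq_self_iff ρ z A).mpr ?_
  rcases Nat.eq_zero_or_pos k with rfl | hk
  · exact Subsingleton.elim _ _
  have : NeZero k := ⟨hk.ne'⟩
  obtain ⟨c, hc⟩ := hρ.exists_eq_scalar hz
  refine Matrix.toLin'.injective (LinearMap.ext fun v => ?_)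
  simp only [Matrix.toLin'_apply, ← Matrix.mulVec_mulVec, hc, Matrix.mulVec_smul]

/-- If conjugation through `ρ` is trivial then the image of `ρ` is abelian, which forces `ρ = 1`
when the group is perfect. -/
lemma eq_one_of_conjRep_trivial {G : Type*} [Group G] (hG : commutator G = ⊤) {k : ℕ}
    (ρ : G →* GL (Fin k) ℂ) (h : ∀ g A, conjRep ρ g A = A) : ρ = 1 := by
  have hcomm : commutator G ≤ ρ.ker := by
    rw [commutator_def, Subgroup.commutator_le]
    intro x _ y _
    rw [MonoidHom.mem_ker, map_commutatorElement, commutatorElement_eq_one_iff_mul_comm]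
    exact Units.ext ((conjRep_eq_self_iff ρ x _).mp (h x (ρ y)))
  rw [hG, top_le_iff] at hcomm
  exact MonoidHom.ker_eq_top_iff.mp hcomm

lemma HasNontrivialIrrepLE.quotient_center {T S : Type*} [Group T] [Group S] [Finite S]
    (hT : commutator T = ⊤) (e : (T ⧸ Subgroup.center T) ≃* S) {n : ℕ}
    (h : HasNontrivialIrrepLE T n) : HasNontrivialIrrepLE S (n ^ 2) := by
  obtain ⟨k, hk, ρ, hirr, hne⟩ := h
  let σ : Representation ℂ S (Matrix (Fin k) (Fin k) ℂ) :=
    (QuotientGroup.lift (Subgroup.center T) (conjRep ρ)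
      fun _ hz => hirr.conjRep_center hz).comp e.symm.toMonoidHom
  have hσ : ∃ s A, σ s A ≠ A := by
    by_contra! hcon
    refine hne (eq_one_of_conjRep_trivial hT ρ fun g A => ?_)
    have := hcon (e g) A
    simp only [σ, MonoidHom.comp_apply, MulEquiv.coe_toMonoidHom, MulEquiv.symm_apply_apply] at this
    exact this
  obtain ⟨d, hd, τ⟩ := hasNontrivialIrrepLE_of_representation σ hσ
  refine ⟨d, hd.trans ?_, τ⟩
  rw [Module.finrank_matrix, Module.finrank_self, Fintype.card_fin, mul_one, ← sq]
  exact Nat.pow_le_pow_left hk 2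

/-- Let `S_i` be non-abelian finite simple groups and `T_i`
finite perfect groups with `T_i/Z(T_i) ≅ S_i`.  Then the counts
`m_n = #{i : S_i has a nontrivial irrep of dimension ≤ n}` are polynomially
bounded in `n` if and only if the corresponding counts `m̃_n` for the `T_i`
are polynomially bounded in `n`. -/
theorem stmt7 (S T : ℕ → Type*) [∀ i, Group (S i)] [∀ i, Finite (S i)]
    [∀ i, Group (T i)] [∀ i, Finite (T i)]
    (hsimple : ∀ i, IsSimpleGroup (S i))
    (hnonab : ∀ i, ∃ a b : S i, a * b ≠ b * a)
    (hTperf : ∀ i, commutator (T i) = ⊤)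
    (hquot : ∀ i, Nonempty ((T i ⧸ Subgroup.center (T i)) ≃* S i)) :
    (∃ b : ℕ, ∀ n : ℕ, 1 ≤ n →
        Set.encard {i : ℕ | HasNontrivialIrrepLE (S i) n} ≤ ((n ^ b : ℕ) : ℕ∞)) ↔
    (∃ b : ℕ, ∀ n : ℕ, 1 ≤ n →
        Set.encard {i : ℕ | HasNontrivialIrrepLE (T i) n} ≤ ((n ^ b : ℕ) : ℕ∞)) := by
  constructor
  · rintro ⟨b, hb⟩
    refine ⟨2 * b, fun n hn => ?_⟩
    calc _ ≤ Set.encard {i : ℕ | HasNontrivialIrrepLE (S i) (n ^ 2)} :=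
          Set.encard_le_encard fun i hi => (hquot i).elim fun e => hi.quotient_center (hTperf i) e
      _ ≤ _ := hb (n ^ 2) (Nat.one_le_pow _ _ hn)
      _ = _ := by rw [pow_mul]
  · rintro ⟨b, hb⟩
    refine ⟨b, fun n hn => le_trans (Set.encard_le_encard fun i hi => ?_) (hb n hn)⟩
    obtain ⟨e⟩ := hquot i
    exact HasNontrivialIrrepLE.of_surjective
      (e.toMonoidHom.comp (QuotientGroup.mk' (Subgroup.center (T i))))
      (e.surjective.comp (QuotientGroup.mk'_surjective _)) hi
end

section
/- Let ρ₀, ρ ∈ ℝ with 0 < ρ₀ < ρ, and let q ≥ 2 be an integer. Let a be a finite subset of ℕ₀ × ℕ such that m/n ≤ ρ₀ for all (m,n) ∈ a, and for each j ∈ ℕ let a_j be a nonempty subset of a. Define the relation ≺ on a by: (m,n) ≺ (m′,n′) if and only if m − nρ > m′ − n′ρ, or (m − nρ = m′ − n′ρ and n < n′); then ≺ is a strict linear order on a. Let (m₀, n₀) ∈ a be ≺-minimal subject to the condition that the set {j ∈ ℕ : (m₀, n₀) ∈ a_j} is infinite. Let (k_j)_{j∈ℕ} be natural numbers with |k_j/j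 − ρ| ≤ 1/j for all j, and define f(j) = n₀k_j − m₀j if j ≥ (ρ − ρ₀)^{−1}, and f(j) = 0 otherwise. Then f(j) ≥ 0 for all j ∈ ℕ, and the series ∑_{j∈ℕ} q^{f(j)} ∑_{(m,n)∈a_j} q^{j(m − nσ)} converges for every real σ > ρ and diverges for every real σ with 0 < σ < ρ. Consequently, the Dirichlet series corresponding to the infinite product ∏_{j∈ℕ} (1 + ξ_{a_j, q^j})^{q^{f(j)}} has abscissa of convergence ρ. -/
/-!
Since `|k j - ρ j| ≤ 1`, for large `j` the exponent `f j` differs from `j (n₀ ρ - m₀)` by at most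
`n₀`. Hence the term of `(m, n)` in the `j`-th summand is, up to a factor in
`[q ^ (-n₀), q ^ n₀]`, equal to
`q ^ (j ((m - n ρ) - (m₀ - n₀ ρ) - n (σ - ρ)))`.

* For `σ > ρ`: for all large `j`, minimality of `(m₀, n₀)` forces `m - n ρ ≤ m₀ - n₀ ρ` for every
  `(m, n) ∈ a_j`, and `n ≥ 1`, so the summand is at most `#a * q ^ n₀ * (q ^ (-(σ - ρ))) ^ j`:
  comparison with a geometric series.
* For `σ < ρ`: infinitely many summands contain the term of `(m₀, n₀)`, which is at least
  `q ^ (-n₀)`, so the summands do not tend to zero. This holds for nonpositive `σ` too, which is what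
  identifies the infimum in the last claim.
-/

/-- The relation `≺` on pairs, relative to the real parameter `ρ`:
`(m,n) ≺ (m',n')` iff `m − nρ > m' − n'ρ`, or
(`m − nρ = m' − n'ρ` and `n < n'`). -/
def PairPrec (ρ : ℝ) (p p' : ℕ × ℕ) : Prop :=
  ((p.1 : ℝ) - (p.2 : ℝ) * ρ > (p'.1 : ℝ) - (p'.2 : ℝ) * ρ) ∨
    ((p.1 : ℝ) - (p.2 : ℝ) * ρ = (p'.1 : ℝ) - (p'.2 : ℝ) * ρ ∧ p.2 < p'.2)

/-- Trichotomy holds on all of `ℕ × ℕ`, for every real `ρ`: if `m - n ρ` and `n` agree, so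
does `m`. -/
theorem pairPrec_trichotomous (ρ : ℝ) (p p' : ℕ × ℕ) (h : ¬ PairPrec ρ p p')
    (h' : ¬ PairPrec ρ p' p) : p = p' := by
  unfold PairPrec at h h'
  push Not at h h'
  have e : (p.1 : ℝ) - (p.2 : ℝ) * ρ = (p'.1 : ℝ) - (p'.2 : ℝ) * ρ := le_antisymm h.1 h'.1
  have e2 : p.2 = p'.2 := le_antisymm (h'.2 e.symm) (h.2 e)
  rw [e2] at e
  have e1 : (p.1 : ℝ) = p'.1 := by linarith
  exact Prod.ext (by exact_mod_cast e1) e2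

theorem pairPrec_irrefl (ρ : ℝ) (p : ℕ × ℕ) : ¬ PairPrec ρ p p := by
  simp [PairPrec]

theorem pairPrec_trans (ρ : ℝ) (p p' p'' : ℕ × ℕ) (h : PairPrec ρ p p')
    (h' : PairPrec ρ p' p'') : PairPrec ρ p p'' := by
  unfold PairPrec at *
  rcases h with h | ⟨h, hn⟩ <;> rcases h' with h' | ⟨h', hn'⟩
  · exact Or.inl (by linarith)
  · exact Or.inl (by linarith)
  · exact Or.inl (by linarith)
  · exact Or.inr ⟨by linarith, by lia⟩

theorem abs_sub_mul_le_one {ρ : ℝ} {k j : ℕ} (hj : 1 ≤ j)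
    (hk : |((k : ℝ) / (j : ℝ)) - ρ| ≤ 1 / (j : ℝ)) :
    ρ * j - 1 ≤ k ∧ (k : ℝ) ≤ ρ * j + 1 := by
  have hj0 : (0 : ℝ) < j := by exact_mod_cast hj
  rw [abs_le] at hk
  obtain ⟨h1, h2⟩ := hk
  have e : (k : ℝ) = (k / j : ℝ) * j := by field_simp
  have e' : (1 / j : ℝ) * j = 1 := by field_simp
  constructor <;> nlinarith

/-- Since `a` is finite, the finitely many exceptional indices of each pair violating `P` have a
common upper bound. -/
theorem eventually_forall_mem {a : Finset (ℕ × ℕ)} {aj : ℕ → Finset (ℕ × ℕ)}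
    (hsub : ∀ j : ℕ, aj j ⊆ a) {P : ℕ × ℕ → Prop}
    (h : ∀ p ∈ a, ¬ P p → {j : ℕ | 1 ≤ j ∧ p ∈ aj j}.Finite) :
    ∀ᶠ j : ℕ in Filter.atTop, ∀ p ∈ aj j, P p := by
  have h1 : ∀ᶠ j : ℕ in Filter.atTop, ∀ p ∈ a, p ∈ aj j → P p := by
    rw [Filter.eventually_all_finset]
    intro p hp
    by_cases hP : P p
    · exact Filter.Eventually.of_forall fun _ _ => hP
    · have h2 := (h p hp hP).eventually_cofinite_notMem
      rw [Nat.cofinite_eq_atTop] at h2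
      filter_upwards [h2, Filter.eventually_ge_atTop 1] with j hj hj1 hpj
      exact absurd ⟨hj1, hpj⟩ hj
  filter_upwards [h1] with j hj p hp
  exact hj p (hsub j hp) hp

/-- The key lemma producing infinite products of Dirichlet
polynomials with prescribed abscissa of convergence `ρ`. -/
theorem stmt10 (ρ₀ ρ : ℝ) (hρ₀ : 0 < ρ₀) (hρ : ρ₀ < ρ)
    (q : ℕ) (hq : 2 ≤ q)
    (a : Finset (ℕ × ℕ)) (hapos : ∀ p ∈ a, 1 ≤ p.2)
    (haρ₀ : ∀ p ∈ a, (p.1 : ℝ) / (p.2 : ℝ) ≤ ρ₀)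
    (aj : ℕ → Finset (ℕ × ℕ))
    (hne : ∀ j : ℕ, 1 ≤ j → (aj j).Nonempty)
    (hsub : ∀ j : ℕ, aj j ⊆ a)
    (m₀ n₀ : ℕ) (hmem : (m₀, n₀) ∈ a)
    -- the set `{j : (m₀,n₀) ∈ a_j}` is infinite
    (hinf : {j : ℕ | 1 ≤ j ∧ (m₀, n₀) ∈ aj j}.Infinite)
    -- `(m₀,n₀)` is `≺`-minimal subject to this condition
    (hmin : ∀ p ∈ a, PairPrec ρ p (m₀, n₀) → {j : ℕ | 1 ≤ j ∧ p ∈ aj j}.Finite)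
    (k : ℕ → ℕ) (hk : ∀ j : ℕ, 1 ≤ j → |((k j : ℝ) / (j : ℝ)) - ρ| ≤ 1 / (j : ℝ))
    (f : ℕ → ℤ)
    (hf : ∀ j : ℕ, f j = if (ρ - ρ₀)⁻¹ ≤ (j : ℝ) then (n₀ : ℤ) * (k j : ℤ) - (m₀ : ℤ) * (j : ℤ) else 0) :
    -- `≺` is a strict linear order on `a`
    IsStrictTotalOrder {p : ℕ × ℕ // p ∈ a} (fun p p' => PairPrec ρ p.1 p'.1) ∧
    -- `f(j) ≥ 0` for all `j`
    (∀ j : ℕ, 0 ≤ f j) ∧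
    -- the series converges for every real `σ > ρ`
    (∀ σ : ℝ, ρ < σ →
      Summable (fun j : ℕ =>
        (q : ℝ) ^ ((f j : ℝ)) *
          ∑ p ∈ aj j, (q : ℝ) ^ ((j : ℝ) * ((p.1 : ℝ) - (p.2 : ℝ) * σ)))) ∧
    -- and diverges for every real `σ` with `0 < σ < ρ`
    (∀ σ : ℝ, 0 < σ → σ < ρ →
      ¬ Summable (fun j : ℕ =>
        (q : ℝ) ^ ((f j : ℝ)) *
          ∑ p ∈ aj j, (q : ℝ) ^ ((j : ℝ) * ((p.1 : ℝ) - (p.2 : ℝ) * σ)))) ∧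
    -- consequently the abscissa of convergence of
    -- `∏_j (1 + ξ_{a_j,q^j})^{q^{f(j)}}` equals `ρ`
    sInf {x : EReal | ∃ σ : ℝ, x = (σ : EReal) ∧
      Summable (fun j : ℕ =>
        (q : ℝ) ^ ((f j : ℝ)) *
          ∑ p ∈ aj j, (q : ℝ) ^ ((j : ℝ) * ((p.1 : ℝ) - (p.2 : ℝ) * σ)))} = (ρ : EReal) := by
  have hq1 : (1 : ℝ) < q := by exact_mod_cast hq
  have hq0 : (0 : ℝ) < q := by linarith
  have hd : 0 < ρ - ρ₀ := by linarith
  -- The two-sided estimate of `f j` beyond the threshold.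
  have hfb : ∀ j : ℕ, 1 ≤ j → (ρ - ρ₀)⁻¹ ≤ (j : ℝ) →
      (j : ℝ) * (n₀ * ρ - m₀) - n₀ ≤ (f j : ℝ) ∧ (f j : ℝ) ≤ (j : ℝ) * (n₀ * ρ - m₀) + n₀ := by
    intro j hj hjt
    obtain ⟨h1, h2⟩ := abs_sub_mul_le_one hj (hk j hj)
    have hn : (0 : ℝ) ≤ n₀ := by positivity
    rw [hf j, if_pos hjt]
    push_cast
    constructor <;> nlinarith [mul_le_mul_of_nonneg_left h1 hn, mul_le_mul_of_nonneg_left h2 hn]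
  have hlarge : ∀ᶠ j : ℕ in Filter.atTop, 1 ≤ j ∧ (ρ - ρ₀)⁻¹ ≤ (j : ℝ) :=
    (Filter.eventually_ge_atTop 1).and
      (tendsto_natCast_atTop_atTop.eventually_ge_atTop (ρ - ρ₀)⁻¹)
  have hconv : ∀ σ : ℝ, ρ < σ →
      Summable (fun j : ℕ =>
        (q : ℝ) ^ ((f j : ℝ)) *
          ∑ p ∈ aj j, (q : ℝ) ^ ((j : ℝ) * ((p.1 : ℝ) - (p.2 : ℝ) * σ))) := by
    intro σ hσ
    have hr1 : (q : ℝ) ^ (-(σ - ρ)) < 1 :=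
      Real.rpow_lt_one_of_one_lt_of_neg hq1 (by linarith)
    have hgeo : Summable fun j : ℕ =>
        ((a.card : ℝ) * (q : ℝ) ^ (n₀ : ℝ)) * ((q : ℝ) ^ (-(σ - ρ))) ^ j :=
      (summable_geometric_of_lt_one (by positivity) hr1).mul_left _
    refine hgeo.of_norm_bounded_eventually_nat ?_
    have hev : ∀ᶠ j : ℕ in Filter.atTop, ∀ p ∈ aj j,
        (p.1 : ℝ) - p.2 * ρ ≤ (m₀ : ℝ) - n₀ * ρ :=
      eventually_forall_mem hsub fun p hp hP => hmin p hp (Or.inl (not_le.mp hP))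
    filter_upwards [hlarge, hev] with j ⟨hj1, hjt⟩ hP
    rw [Real.norm_of_nonneg (by positivity), Finset.mul_sum]
    have hterm : ∀ p ∈ aj j,
        (q : ℝ) ^ ((f j : ℝ)) * (q : ℝ) ^ ((j : ℝ) * ((p.1 : ℝ) - (p.2 : ℝ) * σ)) ≤
          (q : ℝ) ^ (n₀ : ℝ) * ((q : ℝ) ^ (-(σ - ρ))) ^ j := by
      intro p hp
      rw [← Real.rpow_natCast ((q : ℝ) ^ (-(σ - ρ))) j, ← Real.rpow_mul hq0.le,
        ← Real.rpow_add hq0, ← Real.rpow_add hq0]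
      apply Real.rpow_le_rpow_of_exponent_le hq1.le
      have hp2 : (1 : ℝ) ≤ p.2 := by exact_mod_cast hapos p (hsub j hp)
      have hj0 : (0 : ℝ) ≤ j := by positivity
      have hfj := (hfb j hj1 hjt).2
      have hlin : (p.1 : ℝ) - p.2 * σ ≤ (m₀ : ℝ) - n₀ * ρ - (σ - ρ) := by
        nlinarith [hP p hp]
      nlinarith [mul_le_mul_of_nonneg_left hlin hj0]
    refine (Finset.sum_le_card_nsmul _ _ _ hterm).trans ?_
    rw [nsmul_eq_mul, mul_assoc]
    gcongr
    exact hsub j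
  have hdiv : ∀ σ : ℝ, σ < ρ →
      ¬ Summable (fun j : ℕ =>
        (q : ℝ) ^ ((f j : ℝ)) *
          ∑ p ∈ aj j, (q : ℝ) ^ ((j : ℝ) * ((p.1 : ℝ) - (p.2 : ℝ) * σ))) := by
    intro σ hσ hs
    have hc : (0 : ℝ) < (q : ℝ) ^ (-(n₀ : ℝ)) := by positivity
    have hsmall := hs.tendsto_atTop_zero.eventually_lt_const hc
    obtain ⟨j, ⟨-, hpj⟩, hlt, hj1, hjt⟩ :=
      ((Nat.frequently_atTop_iff_infinite.mpr hinf).and_eventually (hsmall.and hlarge)).exists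
    refine absurd hlt (not_lt.mpr ?_)
    have hsum := Finset.single_le_sum
      (f := fun p : ℕ × ℕ => (q : ℝ) ^ ((j : ℝ) * ((p.1 : ℝ) - (p.2 : ℝ) * σ)))
      (fun p _ => by positivity) hpj
    refine le_trans ?_ (mul_le_mul_of_nonneg_left hsum (by positivity))
    rw [← Real.rpow_add hq0]
    apply Real.rpow_le_rpow_of_exponent_le hq1.le
    have hfj := (hfb j hj1 hjt).1
    have hnn : (0 : ℝ) ≤ (j : ℝ) * n₀ * (ρ - σ) :=
      mul_nonneg (by positivity) (by linarith)
    dsimp only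
    nlinarith
  refine ⟨?_, ?_, hconv, fun σ _ hσ => hdiv σ hσ, ?_⟩
  · exact
      { trichotomous := fun p p' h h' => Subtype.ext (pairPrec_trichotomous ρ p.1 p'.1 h h')
        irrefl := fun p => pairPrec_irrefl ρ p.1
        trans := fun p p' p'' => pairPrec_trans ρ p.1 p'.1 p''.1 }
  · intro j
    by_cases hjt : (ρ - ρ₀)⁻¹ ≤ (j : ℝ)
    · have hj0 : (0 : ℝ) < j := lt_of_lt_of_le (inv_pos.mpr hd) hjt
      have hj1 : 1 ≤ j := by exact_mod_cast hj0
      have h1 := (abs_sub_mul_le_one hj1 (hk j hj1)).1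
      -- The threshold on `j` is exactly what upgrades `k j ≥ ρ j - 1` to `k j ≥ ρ₀ j`.
      have h2 : 1 ≤ (j : ℝ) * (ρ - ρ₀) := (inv_le_iff_one_le_mul₀ hd).mp hjt
      have hk0 : ρ₀ * j ≤ k j := by linarith
      have hn0 : (0 : ℝ) < n₀ := by exact_mod_cast hapos _ hmem
      have hm0 : (m₀ : ℝ) ≤ ρ₀ * n₀ := (div_le_iff₀ hn0).mp (haρ₀ _ hmem)
      rw [hf j, if_pos hjt, sub_nonneg]
      have hreal : (m₀ : ℝ) * j ≤ n₀ * k j := by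
        nlinarith [mul_le_mul_of_nonneg_left hk0 hn0.le, mul_le_mul_of_nonneg_right hm0 hj0.le]
      exact_mod_cast hreal
    · rw [hf j, if_neg hjt]
  · apply le_antisymm
    · refine EReal.le_of_forall_lt_iff_le.mp fun σ hσ => sInf_le ⟨σ, rfl, hconv σ ?_⟩
      exact_mod_cast hσ
    · refine le_sInf ?_
      rintro x ⟨σ, rfl, hs⟩
      by_contra! hlt
      exact hdiv σ (by exact_mod_cast hlt) hs
end

section
/- Let (S_i)_{i∈ℕ} be a sequence of pairwise non-isomorphic non-abelian finite simple groups, let f : ℕ → ℕ be a function with f(i) → ∞ as i → ∞, and set n_i = |S_i|^{f(i)} for each i. Then the semisimple profinite group G = ∏_{i∈ℕ} S_i^{n_i} (with the product topology) is representation rigid but not topologically finitely generated. In particular, there exist representation rigid quasi-semisimple profinite groups that are not topologically finitely generated. -/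
/-!
**Representation rigidity.** A finite subgroup of `GL_n(ℂ)` is conjugate to a group of unitary
matrices (average the standard hermitian form). For unitary `a`, `b` one has
`‖[a, b] - 1‖ ≤ 2 ‖a - 1‖ ‖b - 1‖`. Hence, in a finite unitary group, a nontrivial element `g`
closest to `1` commutes with every element at distance less than `1/2` from `1`, provided it is
itself that close. In a nonabelian simple group this would make `g` central, so all nontrivial
elements are at distance at least `1/2` from `1`; total boundedness of the unit ball then bounds
the order of the group in terms of `n` alone (`exists_card_le`, a special case of Jordan's theorem).
As the `S i` are pairwise non-isomorphic, only finitely many of them have a faithful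
`n`-dimensional representation. The kernel of a continuous `n`-dimensional representation of the
product is closed, so it contains all but a bounded number of the factors `S i ^ n_i` together with
their closed product, and the representation factors through a fixed finite quotient `H`. The
simple modules over the semisimple ring `ℂ[H]` fall into finitely many isomorphism classes,
one for each isotypic component of `ℂ[H]` (`exists_finite_classification`).

**No finite topological generation.** Given `d` elements, choose `i` with `f i > d`. There are more
coordinates of type `S i` than elements of `S i ^ d`, so two coordinates agree on all the given
elements, and hence on the closure of the subgroup they generate (`not_topFG_prod`).
-/

open scoped MatrixGroups

/-- Two matrix representations are equivalent if they are conjugate. -/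
def RepEquiv {G : Type*} [Group G] {n : ℕ} (ρ σ : G →* GL (Fin n) ℂ) : Prop :=
  ∃ T : GL (Fin n) ℂ, ∀ g : G, σ g = T * ρ g * T⁻¹

/-- Continuous irreducible `n`-dimensional complex representations of `G`. -/
def ContIrrep (G : Type*) [Group G] [TopologicalSpace G] (n : ℕ) : Type _ :=
  {ρ : G →* GL (Fin n) ℂ // Continuous ρ ∧ MatIrreducible ρ}

/-- Equivalence classes of continuous irreducible `n`-dimensional representations. -/
def IrrepClasses (G : Type*) [Group G] [TopologicalSpace G] (n : ℕ) : Type _ :=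
  Quot (fun ρ σ : ContIrrep G n => RepEquiv ρ.1 σ.1)

/-- `r_n(G)`: the number of equivalence classes of continuous irreducible
`n`-dimensional complex representations of `G`. -/
noncomputable def rCount (G : Type*) [Group G] [TopologicalSpace G] (n : ℕ) : ℕ :=
  Nat.card (IrrepClasses G n)

/-- `R_n(G) = ∑_{k=1}^n r_k(G)`. -/
noncomputable def RCount (G : Type*) [Group G] [TopologicalSpace G] (n : ℕ) : ℕ :=
  ∑ k ∈ Finset.Icc 1 n, rCount G k

/-- `G` is representation rigid if `r_n(G) < ∞` for every `n`. -/
def RepRigid (G : Type*) [Group G] [TopologicalSpace G] : Prop :=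
  ∀ n : ℕ, Finite (IrrepClasses G n)

/-- `G` has polynomial representation growth. -/
def HasPRG (G : Type*) [Group G] [TopologicalSpace G] : Prop :=
  RepRigid G ∧ ∃ c b : ℝ, ∀ n : ℕ, 1 ≤ n → (RCount G n : ℝ) ≤ c * (n : ℝ) ^ b

/-- `G` is topologically finitely generated: it contains a dense finitely
generated subgroup. -/
def TopFG (G : Type*) [Group G] [TopologicalSpace G] : Prop :=
  ∃ S : Set G, S.Finite ∧ Dense ((Subgroup.closure S : Subgroup G) : Set G)

/-- Degree of polynomial representation growth `α(G)`. -/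
noncomputable def repAlpha (G : Type*) [Group G] [TopologicalSpace G] : EReal :=
  Filter.limsup (fun n : ℕ => ((Real.log (RCount G n : ℝ) / Real.log (n : ℝ) : ℝ) : EReal))
    Filter.atTop

/-! ### Orders of simple linear groups -/

section JordanBound

lemma norm_unitary_commutator_sub_one_le {E : Type*} [NormedRing E] [StarRing E] [CStarRing E]
    (a b : unitary E) :
    ‖((a * b * a⁻¹ * b⁻¹ : unitary E) : E) - 1‖ ≤ 2 * ‖(a : E) - 1‖ * ‖(b : E) - 1‖ := by
  have h1 : ((a * b * a⁻¹ * b⁻¹ : unitary E) : E) - 1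
      = (((a : E) - 1) * (b - 1) - (b - 1) * (a - 1)) * ((a⁻¹ * b⁻¹ : unitary E) : E) := by
    have h2 : ((a : E) - 1) * (b - 1) - (b - 1) * (a - 1) = ((a * b : unitary E) : E)
        - ((b * a : unitary E) : E) := by
      push_cast
      noncomm_ring
    rw [h2, sub_mul, ← Submonoid.coe_mul, ← Submonoid.coe_mul]
    have h3 : b * a * (a⁻¹ * b⁻¹) = 1 := by group
    rw [h3, ← mul_assoc]
    rfl
  rw [h1, CStarRing.norm_mul_coe_unitary]
  calc _ ≤ ‖((a : E) - 1) * (b - 1)‖ + ‖((b : E) - 1) * (a - 1)‖ := norm_sub_le _ _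
    _ ≤ ‖(a : E) - 1‖ * ‖(b : E) - 1‖ + ‖(b : E) - 1‖ * ‖(a : E) - 1‖ :=
      add_le_add (norm_mul_le _ _) (norm_mul_le _ _)
    _ = _ := by ring

/-- The nontrivial elements of a finite nonabelian simple group of unitary elements stay away
from `1`. -/
lemma half_le_norm_sub_one {E : Type*} [NormedRing E] [StarRing E] [CStarRing E]
    {G : Type*} [Group G] [Finite G] (hs : IsSimpleGroup G) (hn : ∃ a b : G, a * b ≠ b * a)
    (φ : G →* unitary E) (hφ : Function.Injective φ) {h : G} (hh : h ≠ 1) :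
    1 / 2 ≤ ‖((φ h : unitary E) : E) - 1‖ := by
  by_contra! hlt
  have key : ∀ x : G, x ≠ 1 → 0 < ‖((φ x : unitary E) : E) - 1‖ := by
    intro x hx
    rw [norm_pos_iff, sub_ne_zero]
    intro hc
    exact hx (hφ (Subtype.ext (by simpa using hc)))
  obtain ⟨g, ⟨hg1, hglt⟩, hmin⟩ :=
    Set.exists_min_image {x : G | x ≠ 1 ∧ ‖((φ x : unitary E) : E) - 1‖ < 1 / 2}
      (fun x => ‖((φ x : unitary E) : E) - 1‖) (Set.toFinite _) ⟨h, hh, hlt⟩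
  -- By minimality `g` commutes with every element of the set, in particular with its conjugates.
  have hcomm : ∀ x : G, ‖((φ x : unitary E) : E) - 1‖ < 1 / 2 → g * x = x * g := by
    intro x hx
    by_contra hne
    have hc1 : g * x * g⁻¹ * x⁻¹ ≠ 1 := by
      intro h0
      apply hne
      rw [mul_inv_eq_one, mul_inv_eq_iff_eq_mul] at h0
      exact h0
    have hb := norm_unitary_commutator_sub_one_le (φ g) (φ x)
    have hgp := key g hg1
    have hb2 : ‖((φ (g * x * g⁻¹ * x⁻¹) : unitary E) : E) - 1‖ < ‖((φ g : unitary E) : E) - 1‖ := by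
      rw [map_mul, map_mul, map_mul, map_inv, map_inv]
      refine hb.trans_lt ?_
      nlinarith
    exact absurd (hmin _ ⟨hc1, hb2.trans hglt⟩) (not_le.mpr hb2)
  have hconj : ∀ y : G, ‖((φ (y * g * y⁻¹) : unitary E) : E) - 1‖ < 1 / 2 := by
    intro y
    have : ((φ (y * g * y⁻¹) : unitary E) : E) - 1
        = (φ y : E) * (((φ g : unitary E) : E) - 1) * ((φ y)⁻¹ : unitary E) := by
      rw [mul_sub, sub_mul, mul_one, ← Submonoid.coe_mul, ← Submonoid.coe_mul,
        ← Submonoid.coe_mul, mul_inv_cancel, map_mul, map_mul, map_inv]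
      rfl
    rw [this, CStarRing.norm_mul_coe_unitary, CStarRing.norm_coe_unitary_mul]
    exact hglt
  have hle : Subgroup.normalClosure {g} ≤ Subgroup.centralizer {g} := by
    rw [Subgroup.normalClosure, Subgroup.closure_le]
    intro x hx
    rw [Group.mem_conjugatesOfSet_iff] at hx
    obtain ⟨a, ha, hax⟩ := hx
    rw [Set.mem_singleton_iff] at ha
    subst ha
    obtain ⟨y, rfl⟩ := isConj_iff.mp hax
    rw [SetLike.mem_coe, Subgroup.mem_centralizer_singleton_iff]
    exact (hcomm _ (hconj y)).symm
  have htop : Subgroup.normalClosure {g} = ⊤ := by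
    refine (hs.eq_bot_or_eq_top_of_normal _ Subgroup.normalClosure_normal).resolve_left ?_
    intro h0
    have : g ∈ Subgroup.normalClosure {g} := Subgroup.subset_normalClosure rfl
    rw [h0, Subgroup.mem_bot] at this
    exact hg1 this
  have hgc : g ∈ Subgroup.center G := by
    rw [Subgroup.mem_center_iff]
    intro x
    have : x ∈ Subgroup.centralizer {g} := hle (htop ▸ Subgroup.mem_top x)
    exact Subgroup.mem_centralizer_singleton_iff.mp this
  rcases hs.eq_bot_or_eq_top_of_normal (Subgroup.center G) inferInstance with h0 | h0
  · rw [h0, Subgroup.mem_bot] at hgc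
    exact hg1 hgc
  · obtain ⟨a, b, hab⟩ := hn
    have : a ∈ Subgroup.center G := h0 ▸ Subgroup.mem_top a
    exact hab (Subgroup.mem_center_iff.mp this b).symm

/-- The orders of the nonabelian finite simple subgroups of `unitary E` are bounded: such a group
is `1/2`-separated, so its order is at most the number of `1/4`-balls covering the unit ball. -/
lemma exists_card_le_of_unitary (E : Type*) [NormedRing E] [StarRing E] [CStarRing E]
    [ProperSpace E] : ∃ J : ℕ, ∀ (G : Type*) [Group G] [Finite G], IsSimpleGroup G →
      (∃ a b : G, a * b ≠ b * a) → ∀ φ : G →* unitary E, Function.Injective φ →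
        Nat.card G ≤ J := by
  obtain ⟨t, ht, hcov⟩ := Metric.totallyBounded_iff.mp
    (isCompact_closedBall (0 : E) 1).totallyBounded (1 / 4) (by norm_num)
  refine ⟨Nat.card t, fun G _ _ hs hn φ hφ => ?_⟩
  have hmem : ∀ g : G, ∃ y : t, dist ((φ g : unitary E) : E) y < 1 / 4 := by
    intro g
    have h1 : ((φ g : unitary E) : E) ∈ Metric.closedBall (0 : E) 1 := by
      rw [mem_closedBall_zero_iff]
      nontriviality E
      exact (CStarRing.norm_coe_unitary _).le
    obtain ⟨y, hy, hd⟩ := Set.mem_iUnion₂.mp (hcov h1)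
    exact ⟨⟨y, hy⟩, hd⟩
  choose c hc using hmem
  have := ht.to_subtype
  refine Nat.card_le_card_of_injective c fun g h hgh => ?_
  by_contra hne
  have h1 : h⁻¹ * g ≠ 1 := fun h0 => hne (inv_mul_eq_one.mp h0).symm
  have h2 := half_le_norm_sub_one hs hn φ hφ h1
  have h3 : ((φ (h⁻¹ * g) : unitary E) : E) - 1
      = (((φ h)⁻¹ : unitary E) : E) * ((φ g : unitary E) - (φ h : unitary E) : E) := by
    rw [mul_sub, ← Submonoid.coe_mul, ← Submonoid.coe_mul, inv_mul_cancel, map_mul, map_inv]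
    rfl
  rw [h3, CStarRing.norm_coe_unitary_mul, ← dist_eq_norm] at h2
  have h4 := hc g
  have h5 := hc h
  rw [← hgh] at h5
  have := dist_triangle_right ((φ g : unitary E) : E) (φ h : unitary E) (c g : E)
  linarith

open scoped Matrix.Norms.L2Operator MatrixOrder ComplexOrder in
/-- Unitarization of a representation of a finite group. With `P = ∑ g, ρ(g)ᴴ ρ(g)` written as
`Bᴴ B`, conjugation by `B` makes `ρ` unitary, since `ρ(g)ᴴ P ρ(g) = P`. -/
lemma exists_conj_unitary {G : Type*} [Group G] [Finite G] {n : ℕ} (ρ : G →* GL (Fin n) ℂ) :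
    ∃ φ : G →* unitary (Matrix (Fin n) (Fin n) ℂ), ∃ B : GL (Fin n) ℂ,
      ∀ g, (φ g : Matrix (Fin n) (Fin n) ℂ) = ((B * ρ g * B⁻¹ : GL (Fin n) ℂ) : Matrix _ _ ℂ) := by
  classical
  have := Fintype.ofFinite G
  let M : G → Matrix (Fin n) (Fin n) ℂ := fun g => (ρ g : Matrix (Fin n) (Fin n) ℂ)
  have hM : ∀ g h, M (g * h) = M g * M h := fun g h => by simp [M]
  let P : Matrix (Fin n) (Fin n) ℂ := ∑ g, star (M g) * M g
  have hPd : IsUnit P := by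
    have h1 : (1 : Matrix (Fin n) (Fin n) ℂ).PosDef := Matrix.PosDef.one
    have h2 : P = 1 + ∑ g ∈ Finset.univ.erase (1 : G), star (M g) * M g := by
      change ∑ g, star (M g) * M g = _
      rw [← Finset.add_sum_erase _ _ (Finset.mem_univ (1 : G))]
      simp [M]
    -- The term at `g = 1` is the identity, which makes the sum definite.
    rw [h2]
    refine (h1.add_posSemidef ?_).isUnit
    exact Matrix.posSemidef_sum _ fun g _ => Matrix.posSemidef_conjTranspose_mul_self _
  have hPinv : ∀ h, star (M h) * P * M h = P := by
    intro h
    simp only [P, Finset.mul_sum, Finset.sum_mul]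
    refine Fintype.sum_equiv (Equiv.mulRight h) _ _ fun g => ?_
    simp [hM, star_mul, mul_assoc]
  have hP0 : 0 ≤ P := Finset.sum_nonneg fun g _ => star_mul_self_nonneg _
  obtain ⟨B₀, hB₀⟩ := CStarAlgebra.nonneg_iff_eq_star_mul_self.mp hP0
  have hBu : IsUnit B₀ := by
    rw [hB₀] at hPd
    rw [Matrix.isUnit_iff_isUnit_det] at hPd ⊢
    rw [Matrix.det_mul] at hPd
    exact isUnit_of_mul_isUnit_right hPd
  obtain ⟨B, rfl⟩ := hBu
  have hmem : ∀ g, ((B * ρ g * B⁻¹ : GL (Fin n) ℂ) : Matrix (Fin n) (Fin n) ℂ) ∈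
      unitary (Matrix (Fin n) (Fin n) ℂ) := by
    intro g
    have h1 : star ((B * ρ g * B⁻¹ : GL (Fin n) ℂ) : Matrix (Fin n) (Fin n) ℂ) *
        ((B * ρ g * B⁻¹ : GL (Fin n) ℂ) : Matrix (Fin n) (Fin n) ℂ) = 1 := by
      have h2 := hPinv g
      rw [hB₀] at h2
      have h3 : star (((B⁻¹ : GL (Fin n) ℂ)) : Matrix (Fin n) (Fin n) ℂ) *
          (star (B : Matrix (Fin n) (Fin n) ℂ) * (B : Matrix (Fin n) (Fin n) ℂ)) * ((B⁻¹ : GL (Fin n) ℂ) : Matrix _ _ ℂ)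
          = 1 := by
        rw [← mul_assoc, ← star_mul, mul_assoc, Units.mul_inv, star_one, one_mul]
      rw [← h2] at h3
      simpa [M, star_mul, mul_assoc] using h3
    exact ⟨h1, mul_eq_one_comm.mp h1⟩
  refine ⟨{ toFun := fun g => ⟨_, hmem g⟩, map_one' := ?_, map_mul' := ?_ }, B, fun g => rfl⟩
  · apply Subtype.ext
    simp
  · intro g h
    apply Subtype.ext
    change ((B * ρ (g * h) * B⁻¹ : GL (Fin n) ℂ) : Matrix (Fin n) (Fin n) ℂ) =
      ((B * ρ g * B⁻¹ : GL (Fin n) ℂ) : Matrix (Fin n) (Fin n) ℂ) *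
      ((B * ρ h * B⁻¹ : GL (Fin n) ℂ) : Matrix (Fin n) (Fin n) ℂ)
    rw [← Units.val_mul, map_mul]
    congr 1
    group

open scoped Matrix.Norms.L2Operator in
/-- Jordan's theorem for simple groups: the order of a nonabelian finite simple group with a
faithful `n`-dimensional complex representation is bounded in terms of `n`. -/
lemma exists_card_le (n : ℕ) : ∃ J : ℕ, ∀ (G : Type*) [Group G] [Finite G], IsSimpleGroup G →
      (∃ a b : G, a * b ≠ b * a) → ∀ ρ : G →* GL (Fin n) ℂ, Function.Injective ρ →
        Nat.card G ≤ J := by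
  have : ProperSpace (Matrix (Fin n) (Fin n) ℂ) := FiniteDimensional.proper ℂ _
  obtain ⟨J, hJ⟩ := exists_card_le_of_unitary (Matrix (Fin n) (Fin n) ℂ)
  refine ⟨J, fun G _ _ hs hn ρ hρ => ?_⟩
  obtain ⟨φ, B, hφ⟩ := exists_conj_unitary ρ
  refine hJ G hs hn φ fun g h hgh => hρ ?_
  have h1 := hφ g
  rw [hgh, hφ h] at h1
  have h2 := Units.ext h1
  simpa using h2.symm

end JordanBound

/-! ### Irreducible representations of a finite group -/

section FiniteGroup

universe u

/-- The representation on `ℂⁿ` attached to a matrix representation. -/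
noncomputable def matRep {G : Type*} [Group G] {n : ℕ} (ρ : G →* GL (Fin n) ℂ) :
    Representation ℂ G (Fin n → ℂ) :=
  ((Matrix.toLinAlgEquiv' : Matrix (Fin n) (Fin n) ℂ ≃ₐ[ℂ] _) :
    Matrix (Fin n) (Fin n) ℂ →* Module.End ℂ (Fin n → ℂ)).comp ((Units.coeHom _).comp ρ)

lemma matRep_apply {G : Type*} [Group G] {n : ℕ} (ρ : G →* GL (Fin n) ℂ) (g : G)
    (v : Fin n → ℂ) : matRep ρ g v = Matrix.mulVec (ρ g : Matrix (Fin n) (Fin n) ℂ) v := by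
  simp [matRep]

open scoped MonoidAlgebra

lemma isSimpleModule_matRep {G : Type*} [Group G] {n : ℕ} (hn : n ≠ 0) (ρ : G →* GL (Fin n) ℂ)
    (hρ : MatIrreducible ρ) : IsSimpleModule ℂ[G] (matRep ρ).asModule := by
  rw [← Representation.irreducible_iff_isSimpleModule_asModule]
  have : NeZero n := ⟨hn⟩
  refine { exists_pair_ne := ⟨⊥, ⊤, fun h => ?_⟩, eq_bot_or_eq_top := fun W => ?_ }
  · have h1 : (⊥ : Submodule ℂ (Fin n → ℂ)) = ⊤ := congrArg Subrepresentation.toSubmodule h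
    exact bot_ne_top h1
  · refine (hρ W.toSubmodule fun g v hv => ?_).imp (fun h => ?_) fun h => ?_
    · rw [← matRep_apply]
      exact W.apply_mem_toSubmodule g hv
    · exact Subrepresentation.toSubmodule_injective h
    · exact Subrepresentation.toSubmodule_injective h

lemma repEquiv_of_linearEquiv {G : Type*} [Group G] {n : ℕ} (ρ σ : G →* GL (Fin n) ℂ)
    (e : (matRep ρ).asModule ≃ₗ[ℂ[G]] (matRep σ).asModule) : RepEquiv ρ σ := by
  let e' : (Fin n → ℂ) ≃ₗ[ℂ] (Fin n → ℂ) :=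
    (matRep ρ).asModuleEquiv.symm ≪≫ₗ e.restrictScalars ℂ ≪≫ₗ (matRep σ).asModuleEquiv
  have he : ∀ g v, e' (matRep ρ g v) = matRep σ g (e' v) := by
    intro g v
    simp only [e', LinearEquiv.trans_apply, Representation.asModuleEquiv_symm_map_rho,
      LinearEquiv.restrictScalars_apply, map_smul, Representation.asModuleEquiv_map_smul]
    simp
  let T : GL (Fin n) ℂ :=
    ⟨LinearMap.toMatrix' e'.toLinearMap, LinearMap.toMatrix' e'.symm.toLinearMap,
      by rw [← LinearMap.toMatrix'_comp]; simp, by rw [← LinearMap.toMatrix'_comp]; simp⟩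
  refine ⟨T, fun g => ?_⟩
  rw [eq_mul_inv_iff_mul_eq]
  apply Units.ext
  apply Matrix.toLin'.injective
  ext1 v
  ext1
  have := he g (Pi.single v 1)
  rw [matRep_apply, matRep_apply] at this
  simpa [T, Matrix.toLin'_mul] using this.symm

/-- There are only finitely many classes of `n`-dimensional irreducible representations of a
finite group: each occurs in the regular module `ℂ[H]`, whose finitely many isotypic components
classify the simple modules. -/
lemma exists_finite_classification (H : Type u) [Group H] [Finite H] (n : ℕ) :
    ∃ (X : Type u) (_ : Finite X) (c : {σ : H →* GL (Fin n) ℂ // MatIrreducible σ} → X),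
      ∀ σ τ, c σ = c τ → RepEquiv σ.1 τ.1 := by
  rcases eq_or_ne n 0 with rfl | hn
  · refine ⟨ULift Unit, inferInstance, fun _ => ⟨()⟩, fun σ τ _ => ⟨1, fun g => ?_⟩⟩
    apply Units.ext
    ext i
    exact i.elim0
  -- This instance is the hypothesis of Maschke's theorem.
  have : NeZero (Nat.card H : ℂ) := ⟨by exact_mod_cast Nat.card_pos.ne'⟩
  have hfin : Module.Finite ℂ ℂ[H] := by
    infer_instance
  have hN : IsNoetherian ℂ[H] ℂ[H] := isNoetherian_of_tower ℂ inferInstance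
  have key : ∀ σ : {σ : H →* GL (Fin n) ℂ // MatIrreducible σ},
      ∃ I : Ideal ℂ[H], IsSimpleModule ℂ[H] I ∧ Nonempty ((matRep σ.1).asModule ≃ₗ[ℂ[H]] I) := by
    intro σ
    have := isSimpleModule_matRep hn σ.1 σ.2
    obtain ⟨I, ⟨e⟩⟩ := IsSemisimpleRing.exists_linearEquiv_ideal_of_isSimpleModule ℂ[H]
      (matRep σ.1).asModule
    exact ⟨I, IsSimpleModule.congr e.symm, ⟨e⟩⟩
  choose I hI e using key
  refine ⟨isotypicComponents ℂ[H] ℂ[H], inferInstance,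
    fun σ => ⟨isotypicComponent ℂ[H] ℂ[H] (I σ), I σ, hI σ, rfl⟩, fun σ τ h => ?_⟩
  have h1 : isotypicComponent ℂ[H] ℂ[H] (I σ) = isotypicComponent ℂ[H] ℂ[H] (I τ) :=
    congrArg Subtype.val h
  have hle : I σ ≤ isotypicComponent ℂ[H] ℂ[H] (I τ) := h1 ▸ (I σ).le_isotypicComponent
  have hs := hI σ
  have ht := hI τ
  obtain ⟨e'⟩ := isIsotypicOfType_submodule_iff.mp
    (IsIsotypicOfType.isotypicComponent ℂ[H] ℂ[H] (I τ)) (I σ) hle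
  exact repEquiv_of_linearEquiv _ _ ((e σ).some ≪≫ₗ e' ≪≫ₗ (e τ).some.symm)

end FiniteGroup

/-! ### Representation rigidity of the product -/

section Rigidity

lemma finite_setOf_card_le (S : ℕ → Type*) [∀ i, Group (S i)] [∀ i, Finite (S i)]
    (hpairwise : ∀ i j : ℕ, i ≠ j → IsEmpty (S i ≃* S j)) (J : ℕ) :
    {i | Nat.card (S i) ≤ J}.Finite := by
  -- An index is determined by the order `k` of `S i` and its multiplication table on `Fin k`.
  have e : ∀ i, S i ≃ Fin (Nat.card (S i)) := fun i => Finite.equivFin (S i)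
  let c : {i | Nat.card (S i) ≤ J} → Σ k : Fin (J + 1), (Fin k → Fin k → Fin k) := fun i =>
    ⟨⟨Nat.card (S i), Nat.lt_succ_of_le i.2⟩, fun a b => e i ((e i).symm a * (e i).symm b)⟩
  have hc : Function.Injective c := by
    rintro ⟨i, hi⟩ ⟨j, hj⟩ hij
    by_contra hne
    have hne' : i ≠ j := fun h => hne (Subtype.ext h)
    have key : ∀ (k l : ℕ) (hk : k < J + 1) (hl : l < J + 1) (m : Fin k → Fin k → Fin k)
        (m' : Fin l → Fin l → Fin l),
        (⟨⟨k, hk⟩, m⟩ : Σ k : Fin (J + 1), (Fin k → Fin k → Fin k)) = ⟨⟨l, hl⟩, m'⟩ →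
        ∃ E : Fin k ≃ Fin l, ∀ a b, E (m a b) = m' (E a) (E b) := by
      intro k l hk hl m m' h
      obtain ⟨h1, h2⟩ := Sigma.mk.inj_iff.mp h
      obtain rfl : k = l := congrArg Fin.val h1
      obtain rfl := eq_of_heq h2
      exact ⟨Equiv.refl _, fun a b => rfl⟩
    obtain ⟨E, hE⟩ := key _ _ _ _ _ _ hij
    refine (hpairwise i j hne').false
      { toEquiv := ((e i).trans E).trans (e j).symm, map_mul' := fun a b => ?_ }
    have := hE (e i a) (e i b)
    simp only [Equiv.symm_apply_apply] at this
    simp [this]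
  exact Set.finite_coe_iff.mp (Finite.of_injective c hc)

/-- A closed subgroup of `∏ i, G i` which contains all the
factors `G i` with `i ≥ N` contains every element whose first `N` coordinates are trivial, such an element being the limit of its truncations. -/
lemma mem_of_isClosed_of_mulSingle {G : ℕ → Type*} [∀ i, Group (G i)]
    [∀ i, TopologicalSpace (G i)] (K : Subgroup (∀ i, G i)) (hK : IsClosed (K : Set (∀ i, G i)))
    (N : ℕ) (h : ∀ i, N ≤ i → ∀ s : G i, Pi.mulSingle i s ∈ K) (x : ∀ i, G i)
    (hx : ∀ i < N, x i = 1) : x ∈ K := by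
  let y : ℕ → ∀ i, G i := fun M i => if i < M then x i else 1
  have hy : ∀ M, y M ∈ K := by
    intro M
    refine Submonoid.pi_mem_of_mulSingle_mem_aux (Finset.range M) (y M) (fun i hi => ?_)
      fun i _ => ?_
    · rw [Finset.mem_range] at hi
      simp [y, hi]
    · rcases lt_or_ge i N with hiN | hiN
      · have : y M i = 1 := by simp [y, hx i hiN]
        rw [this, Pi.mulSingle_one]
        exact K.one_mem
      · exact h i hiN _
  refine hK.mem_of_tendsto (b := Filter.atTop) (f := y) ?_ (Filter.Eventually.of_forall hy)
  rw [tendsto_pi_nhds]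
  intro i
  refine tendsto_const_nhds.congr' ?_
  filter_upwards [Filter.eventually_gt_atTop i] with M hM
  simp [y, hM]

/-- If every `n`-dimensional continuous representation kills the coordinates from `N` on, then
it factors through the finite product of the first `N` coordinates, so there are finitely many
classes. -/
lemma finite_irrepClasses {G : ℕ → Type*} [∀ i, Group (G i)] [∀ i, Finite (G i)]
    [∀ i, TopologicalSpace (G i)] (n N : ℕ)
    (h : ∀ ρ : (∀ i, G i) →* GL (Fin n) ℂ, Continuous ρ →
      ∀ x : ∀ i, G i, (∀ i < N, x i = 1) → ρ x = 1) :
    Finite (IrrepClasses (∀ i, G i) n) := by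
  let ext : (∀ i : Fin N, G i) →* (∀ i, G i) :=
    { toFun := fun x i => if hi : i < N then x ⟨i, hi⟩ else 1
      map_one' := by
        ext i
        by_cases hi : i < N <;> simp [hi]
      map_mul' := fun x y => by
        ext i
        by_cases hi : i < N <;> simp [hi] }
  have hfac : ∀ ρ : (∀ i, G i) →* GL (Fin n) ℂ, Continuous ρ → ∀ x : ∀ i, G i,
      ρ (ext fun i => x i) = ρ x := by
    intro ρ hρ x
    rw [← inv_mul_eq_one, ← map_inv, ← map_mul]
    refine h ρ hρ _ fun i hi => ?_
    simp [ext, hi]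
  obtain ⟨X, hX, c, hc⟩ := exists_finite_classification (∀ i : Fin N, G i) n
  let c' : ContIrrep (∀ i, G i) n → X := fun ρ => c ⟨ρ.1.comp ext, fun W hW =>
    ρ.2.2 W fun g v hv => by
      rw [← hfac ρ.1 ρ.2.1 g]
      exact hW _ v hv⟩
  have hc' : ∀ ρ σ, c' ρ = c' σ → RepEquiv ρ.1 σ.1 := by
    intro ρ σ heq
    obtain ⟨T, hT⟩ := hc _ _ heq
    refine ⟨T, fun g => ?_⟩
    rw [← hfac ρ.1 ρ.2.1 g, ← hfac σ.1 σ.2.1 g]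
    exact hT _
  refine Finite.of_injective (fun q : IrrepClasses (∀ i, G i) n => c' (Quot.out q))
    fun p q hpq => ?_
  rw [← Quot.out_eq p, ← Quot.out_eq q]
  exact Quot.sound (hc' _ _ hpq)

lemma repRigid_prod (S : ℕ → Type*) [∀ i, Group (S i)] [∀ i, Finite (S i)]
    [∀ i, TopologicalSpace (S i)]
    (hsimple : ∀ i, IsSimpleGroup (S i))
    (hnonab : ∀ i, ∃ a b : S i, a * b ≠ b * a)
    (hpairwise : ∀ i j : ℕ, i ≠ j → IsEmpty (S i ≃* S j)) (m : ℕ → ℕ) :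
    RepRigid (∀ i : ℕ, Fin (m i) → S i) := by
  intro n
  obtain ⟨J, hJ⟩ := exists_card_le n
  obtain ⟨N, hN⟩ : ∃ N, ∀ i, N ≤ i → J < Nat.card (S i) := by
    obtain ⟨b, hb⟩ := (finite_setOf_card_le S hpairwise J).bddAbove
    refine ⟨b + 1, fun i hi => ?_⟩
    by_contra! hle
    have : i ≤ b := hb hle
    omega
  refine finite_irrepClasses n N fun ρ hρ x hx => ?_
  refine mem_of_isClosed_of_mulSingle ρ.ker ?_ N (fun i hi s => ?_) x hx
  · exact isClosed_singleton.preimage hρ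
  · let ι : (Fin (m i) → S i) →* (∀ i : ℕ, Fin (m i) → S i) :=
      MonoidHom.mulSingle (fun i : ℕ => Fin (m i) → S i) i
    change s ∈ (ρ.comp ι).ker
    refine Subgroup.pi_mem_of_mulSingle_mem s fun j => ?_
    let τ : S i →* GL (Fin n) ℂ := (ρ.comp ι).comp (MonoidHom.mulSingle (fun _ => S i) j)
    change s j ∈ τ.ker
    rcases (hsimple i).eq_bot_or_eq_top_of_normal τ.ker inferInstance with h0 | h0
    · exact absurd (hJ (S i) (hsimple i) (hnonab i) τ ((MonoidHom.ker_eq_bot_iff τ).mp h0))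
        (not_le.mpr (hN i hi))
    · rw [h0]
      exact Subgroup.mem_top _

end Rigidity

/-! ### Topological generation -/

section Generation

/-- If `m i > |S i| ^ d`, then for any `d` elements of the product two of the `m i` coordinates
in `S i` agree on all of them, so these elements lie in a proper closed subgroup. -/
lemma not_topFG_prod (S : ℕ → Type*) [∀ i, Group (S i)] [∀ i, Finite (S i)]
    [∀ i, Nontrivial (S i)] [∀ i, TopologicalSpace (S i)] [∀ i, DiscreteTopology (S i)]
    (m : ℕ → ℕ) (hm : ∀ d, ∃ i, Nat.card (S i) ^ d < m i) :
    ¬ TopFG (∀ i : ℕ, Fin (m i) → S i) := by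
  rintro ⟨A, hA, hdense⟩
  have := hA.to_subtype
  obtain ⟨i, hi⟩ := hm (Nat.card A)
  have hninj : ¬ Function.Injective (fun (j : Fin (m i)) (a : A) => a.1 i j) := by
    intro hinj
    have := Nat.card_le_card_of_injective _ hinj
    rw [Nat.card_fin, Nat.card_fun] at this
    omega
  simp only [Function.Injective, not_forall] at hninj
  obtain ⟨j, k, hjk, hne⟩ := hninj
  let K : Subgroup (∀ i : ℕ, Fin (m i) → S i) :=
    { carrier := {x | x i j = x i k}
      mul_mem' := fun {x y} hx hy => by
        simp only [Set.mem_ofPred_eq, Pi.mul_apply] at *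
        rw [hx, hy]
      one_mem' := rfl
      inv_mem' := fun {x} hx => by
        simp only [Set.mem_ofPred_eq, Pi.inv_apply] at *
        rw [hx] }
  have hAK : Subgroup.closure A ≤ K :=
    (Subgroup.closure_le K).mpr fun a ha => congrFun hjk ⟨a, ha⟩
  have hKc : IsClosed (K : Set (∀ i : ℕ, Fin (m i) → S i)) :=
    isClosed_eq ((continuous_apply j).comp (continuous_apply i))
      ((continuous_apply k).comp (continuous_apply i))
  have hall : ∀ x, x ∈ K := fun x =>
    hKc.closure_subset_iff.mpr hAK (hdense x)
  obtain ⟨s, hs⟩ := exists_ne (1 : S i)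
  have h1 := hall (Pi.mulSingle i (Pi.mulSingle j s))
  change (Pi.mulSingle i (Pi.mulSingle j s) : ∀ i : ℕ, Fin (m i) → S i) i j =
    (Pi.mulSingle i (Pi.mulSingle j s) : ∀ i : ℕ, Fin (m i) → S i) i k at h1
  rw [Pi.mulSingle_eq_same, Pi.mulSingle_eq_same, Pi.mulSingle_eq_of_ne (Ne.symm hne)] at h1
  exact hs h1

end Generation

/-- If `(S_i)` are pairwise non-isomorphic non-abelian finite
simple groups, `f(i) → ∞` and `n_i = |S_i|^{f(i)}`, then the semisimple
profinite group `G = ∏_i S_i^{n_i}` is representation rigid but not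
topologically finitely generated. -/
theorem stmt14 (S : ℕ → Type*) [∀ i, Group (S i)] [∀ i, Finite (S i)]
    [∀ i, TopologicalSpace (S i)] [∀ i, DiscreteTopology (S i)]
    (hsimple : ∀ i, IsSimpleGroup (S i))
    (hnonab : ∀ i, ∃ a b : S i, a * b ≠ b * a)
    (hpairwise : ∀ i j : ℕ, i ≠ j → IsEmpty (S i ≃* S j))
    (f : ℕ → ℕ) (hf : Filter.Tendsto f Filter.atTop Filter.atTop) :
    RepRigid (∀ i : ℕ, Fin (Nat.card (S i) ^ f i) → S i) ∧
      ¬ TopFG (∀ i : ℕ, Fin (Nat.card (S i) ^ f i) → S i) := by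
  have hnt : ∀ i, Nontrivial (S i) := fun i => (hsimple i).toNontrivial
  refine ⟨repRigid_prod S hsimple hnonab hpairwise _, not_topFG_prod S _ fun d => ?_⟩
  obtain ⟨i, hi⟩ := (hf.eventually_gt_atTop d).exists
  exact ⟨i, Nat.pow_lt_pow_right Finite.one_lt_card hi⟩
end

section
/- The semisimple profinite group G = ∏_{n≥5} Alt(n)^{n!/2} (the product over all integers n ≥ 5 of the (n!/2)-fold direct power of the alternating group Alt(n), with the product topology) is topologically generated by 3 elements, but G does not have polynomial representation growth. -/
/-!
Generation. For `n ≥ 5` choose generators `x, y` of `Alt(n)`. Index the `n!/2` factors of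
`Alt(n)^{n!/2}` by the elements of `Alt(n)` and take the three elements of `G` that are, in the
factor indexed by `z`, equal to `x`, `y` and `z` respectively. They project onto every simple factor.
An isomorphism between two factors matching the projections of all three elements preserves `n`, by
comparison of orders, fixes `x` and `y`, hence is the identity, hence identifies the two indices `z`.
So no two projections are related by an isomorphism, and the Goursat-type lemma
`exists_eq_on_finset` for perfect simple groups shows that the generated subgroup surjects onto
every finite subproduct, i.e. is dense.

That `Alt(n)` has two generators (`alternatingGroup_two_generated`) is seen with the 3-cycle
`swap a b * swap a c` and an even permutation preserving `{a, b}` and acting as a full cycle on the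
other points: the conjugates of the former by powers of the latter give, up to inversion, all
`swap a b * swap a x`.

Growth. `Alt(n)` has a nontrivial irreducible representation of some dimension `d ≤ n`, a minimal
invariant subspace of the sum-zero vectors in `ℂⁿ`. Its pullbacks along the `n!/2` projections
`G → Alt(n)` have distinct kernels, hence are inequivalent, so `R_n(G) ≥ n!/2`, which is not bounded
by any `c * n ^ b`.
-/

open scoped MatrixGroups

/-- `G` is topologically generated by at most `n` elements. -/
def TopGenLE (G : Type*) [Group G] [TopologicalSpace G] (n : ℕ) : Prop :=
  ∃ S : Finset G, S.card ≤ n ∧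
    Dense ((Subgroup.closure (S : Set G) : Subgroup G) : Set G)

/-- The alternating groups are finite and carry the discrete topology. -/
noncomputable instance (n : ℕ) : TopologicalSpace (alternatingGroup (Fin n)) := ⊥

instance (n : ℕ) : DiscreteTopology (alternatingGroup (Fin n)) := ⟨rfl⟩

/-- The semisimple profinite group `G = ∏_{n ≥ 5} Alt(n)^{n!/2}`. -/
abbrev G15 : Type :=
  ∀ n : {n : ℕ // 5 ≤ n}, Fin (Nat.factorial n.1 / 2) → alternatingGroup (Fin n.1)

/-! ### Two generators for the alternating group -/

open Equiv in
/-- If `H` contains all `swap a b * swap a x`, then `H` and `swap a b * H` cover the symmetric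
group. When `H` lies in the alternating group, parity then forces equality. -/
theorem swap_mul_mem_or {α : Type*} [Finite α] [DecidableEq α] {a b : α} (hab : a ≠ b)
    (H : Subgroup (Perm α)) (hH : ∀ x, x ≠ a → x ≠ b → swap a b * swap a x ∈ H) (σ : Perm α) :
    σ ∈ H ∨ swap a b * σ ∈ H := by
  have ha : ∀ x, x ≠ a → swap a b * swap a x ∈ H := by
    intro x hx
    by_cases hxb : x = b
    · subst hxb; simp [H.one_mem]
    · exact hH x hx hxb
  have ha' : ∀ x, x ≠ a → swap a x * swap a b ∈ H := by
    intro x hx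
    simpa using H.inv_mem (ha x hx)
  have key : ∀ x y, x ≠ y → swap a b * swap x y ∈ H := by
    intro x y hxy
    by_cases hx : x = a
    · subst hx; exact ha y hxy.symm
    by_cases hy : y = a
    · subst hy; rw [swap_comm x]; exact ha x hxy
    have e : swap x y = swap a x * swap a y * swap a x := by
      have := Equiv.swap_apply_apply (swap a x) a y
      rw [swap_apply_left, swap_apply_of_ne_of_ne hy hxy.symm] at this
      rw [this, swap_inv]
    have : swap a b * swap x y
        = (swap a b * swap a x) * (swap a y * swap a b) * (swap a b * swap a x) := by
      rw [e]; simp [mul_assoc]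
    rw [this]
    exact H.mul_mem (H.mul_mem (ha x hx) (ha' y hy)) (ha x hx)
  induction σ using Perm.swap_induction_on with
  | one => exact Or.inl H.one_mem
  | swap_mul f x y hxy ih =>
    rcases ih with ih | ih
    · right
      rw [← mul_assoc]
      exact H.mul_mem (key x y hxy) ih
    · left
      have h1 : swap x y * swap a b ∈ H := by simpa using H.inv_mem (key x y hxy)
      have := H.mul_mem h1 ih
      simpa [mul_assoc] using this

open Equiv in
theorem alternatingGroup_two_generated {α : Type*} [Fintype α] [DecidableEq α]
    (h : 3 ≤ Fintype.card α) :
    ∃ x y : alternatingGroup α, Subgroup.closure {x, y} = ⊤ := by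
  obtain ⟨a, b, c, hab, hac, hbc⟩ := Fintype.two_lt_card_iff.1 h
  obtain ⟨f, hf, hfs⟩ := Finset.exists_cycleOn (({a, b} : Finset α)ᶜ)
  have hfa : f a = a := by
    by_contra h0
    have := hfs (Perm.mem_support.2 h0)
    simp at this
  have hfb : f b = b := by
    by_contra h0
    have := hfs (Perm.mem_support.2 h0)
    simp at this
  have hcomm : Commute (swap a b) f := by
    have := Equiv.swap_apply_apply f a b
    rw [hfa, hfb] at this
    rw [commute_iff_eq]
    nth_rw 1 [this]
    simp
  -- the parity of `f` is corrected by the transposition `swap a b`, which is disjoint from it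
  obtain ⟨v, hv, hvalt⟩ : ∃ v : Perm α, (v = f ∨ v = swap a b * f) ∧ v ∈ alternatingGroup α := by
    rcases Int.units_eq_one_or (Perm.sign f) with h1 | h1
    · exact ⟨f, Or.inl rfl, h1⟩
    · exact ⟨_, Or.inr rfl, by simp [Perm.mem_alternatingGroup, Perm.sign_swap hab, h1]⟩
  have hu : swap a b * swap a c ∈ alternatingGroup α := by
    simp [Perm.mem_alternatingGroup, Perm.sign_swap hab, Perm.sign_swap hac]
  refine ⟨⟨_, hu⟩, ⟨v, hvalt⟩, ?_⟩
  set H := Subgroup.closure {(⟨_, hu⟩ : alternatingGroup α), ⟨v, hvalt⟩} with hHdef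
  set K := H.map (alternatingGroup α).subtype with hK
  have huK : swap a b * swap a c ∈ K := ⟨⟨_, hu⟩, Subgroup.subset_closure (by simp), rfl⟩
  have hvK : v ∈ K := ⟨⟨v, hvalt⟩, Subgroup.subset_closure (by simp), rfl⟩
  have hKalt : K ≤ alternatingGroup α := by
    rintro _ ⟨y, -, rfl⟩; exact y.2
  have hall : ∀ x, x ≠ a → x ≠ b → swap a b * swap a x ∈ K := by
    intro x hxa hxb
    obtain ⟨i, hi⟩ : f.SameCycle c x :=
      hf.2 (by simp [hac.symm, hbc.symm]) (by simp [hxa, hxb])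
    have hia : (f ^ i) a = a := by
      exact Perm.zpow_apply_eq_self_of_apply_eq_self hfa i
    have hib : (f ^ i) b = b := Perm.zpow_apply_eq_self_of_apply_eq_self hfb i
    have h1 : (f ^ i) * (swap a b * swap a c) * (f ^ i)⁻¹ = swap a b * swap a x := by
      have e1 := Equiv.swap_apply_apply (f ^ i) a b
      have e2 := Equiv.swap_apply_apply (f ^ i) a c
      rw [hia, hib] at e1
      rw [hia, hi] at e2
      rw [e2]; nth_rw 2 [e1]; group
    have h2 : v ^ i = f ^ i ∨ v ^ i = swap a b * f ^ i := by
      rcases hv with rfl | rfl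
      · exact Or.inl rfl
      · rw [hcomm.mul_zpow]
        rcases Int.even_or_odd i with he | ho
        · left
          obtain ⟨j, rfl⟩ := he
          rw [zpow_add, ← (Commute.refl (swap a b)).mul_zpow]; simp
        · right
          obtain ⟨j, rfl⟩ := ho
          rw [zpow_add, zpow_mul]; simp [zpow_ofNat, sq]
    have h3 := K.mul_mem (K.mul_mem (K.zpow_mem hvK i) huK) (K.inv_mem (K.zpow_mem hvK i))
    rcases h2 with h2 | h2
    · rwa [h2, h1] at h3
    · rw [h2] at h3
      have : swap a b * f ^ i * (swap a b * swap a c) * (swap a b * f ^ i)⁻¹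
          = swap a x * swap a b := by
        have : swap a b * f ^ i * (swap a b * swap a c) * (swap a b * f ^ i)⁻¹
          = swap a b * (f ^ i * (swap a b * swap a c) * (f ^ i)⁻¹) * (swap a b)⁻¹ := by group
        rw [this, h1]; simp
      rw [this] at h3
      simpa using K.inv_mem h3
  rw [eq_top_iff]
  rintro σ -
  have hσ : (σ : Perm α) ∈ K := by
    rcases swap_mul_mem_or hab K hall σ with h0 | h0
    · exact h0
    · have := hKalt h0
      have hs := σ.2
      rw [Perm.mem_alternatingGroup] at this hs
      simp [hs, Perm.sign_swap hab] at this
  obtain ⟨τ, hτ, e⟩ := hσ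
  rwa [← Subtype.ext e]

/-! ### Subgroups of products of perfect simple groups -/

/-- If no two of the surjections `π i` onto perfect simple groups differ by an isomorphism, then the
elements killed by `π j` for all `j ∈ T` still surject onto `S i`. For `T = {j}` the image is normal
in `S i`, and triviality would make `π i` factor through an isomorphism `S j ≃* S i`. The general
case follows by induction from `⁅M, N⁆ ≤ M ⊓ N`, since `S i` is perfect. -/
theorem map_iInf_ker_eq_top {H I : Type*} [Group H] {S : I → Type*} [∀ i, Group (S i)]
    (hsimple : ∀ i, IsSimpleGroup (S i)) (hperf : ∀ i, commutator (S i) = ⊤)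
    (π : ∀ i, H →* S i) (hsurj : ∀ i, Function.Surjective (π i))
    (hiso : ∀ i j, i ≠ j → ∀ φ : S j ≃* S i, ∃ h, π i h ≠ φ (π j h))
    (i : I) (T : Finset I) (hiT : i ∉ T) :
    (⨅ j ∈ T, (π j).ker).map (π i) = ⊤ := by
  classical
  induction T using Finset.induction_on with
  | empty => simpa [← MonoidHom.range_eq_map, MonoidHom.range_eq_top] using hsurj i
  | insert j T hj ih =>
    have ih := ih (by simp at hiT; tauto)
    have hij : i ≠ j := by simp at hiT; tauto
    have hN : ((π j).ker.map (π i)) = ⊤ := by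
      have hn : ((π j).ker.map (π i)).Normal := Subgroup.Normal.map inferInstance _ (hsurj i)
      refine hn.eq_bot_or_eq_top.resolve_left fun hbot => ?_
      have hle : (π j).ker ≤ (π i).ker := by
        rwa [Subgroup.map_eq_bot_iff] at hbot
      set φ : S j →* S i := (π j).liftOfSurjective (hsurj j) ⟨π i, hle⟩ with hφ
      have hφc : ∀ h, φ (π j h) = π i h := fun h =>
        MonoidHom.liftOfRightInverse_comp_apply _ _ _ _ h
      have hφs : Function.Surjective φ := fun y => by
        obtain ⟨h, rfl⟩ := hsurj i y
        exact ⟨_, hφc h⟩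
      have hφi : Function.Injective φ := by
        rw [← MonoidHom.ker_eq_bot_iff]
        refine (MonoidHom.normal_ker φ).eq_bot_or_eq_top.resolve_right fun ht => ?_
        obtain ⟨y, hy⟩ := exists_ne (1 : S i)
        obtain ⟨x, rfl⟩ := hφs y
        exact hy (MonoidHom.mem_ker.1 (ht ▸ Subgroup.mem_top x))
      obtain ⟨h, hh⟩ := hiso i j hij (MulEquiv.ofBijective φ ⟨hφi, hφs⟩)
      exact hh (hφc h).symm
    rw [eq_top_iff, ← hperf i, commutator_def]
    nth_rw 1 [← hN, ← ih]
    rw [← Subgroup.map_commutator]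
    apply Subgroup.map_mono
    rw [Finset.iInf_insert]
    have : (⨅ j ∈ T, (π j).ker).Normal := by
      refine Subgroup.normal_iInf_normal fun j => Subgroup.normal_iInf_normal fun _ => inferInstance
    exact Subgroup.commutator_le_inf _ _

/-- Under the same hypotheses, `H` surjects onto every finite subproduct of the `S i`. -/
theorem exists_eq_on_finset {H I : Type*} [Group H] {S : I → Type*} [∀ i, Group (S i)]
    (hsimple : ∀ i, IsSimpleGroup (S i)) (hperf : ∀ i, commutator (S i) = ⊤)
    (π : ∀ i, H →* S i) (hsurj : ∀ i, Function.Surjective (π i))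
    (hiso : ∀ i j, i ≠ j → ∀ φ : S j ≃* S i, ∃ h, π i h ≠ φ (π j h))
    (T : Finset I) (g : ∀ i, S i) : ∃ h, ∀ i ∈ T, π i h = g i := by
  classical
  induction T using Finset.induction_on with
  | empty => exact ⟨1, by simp⟩
  | insert i T hi ih =>
    obtain ⟨h, hh⟩ := ih
    have := map_iInf_ker_eq_top hsimple hperf π hsurj hiso i T hi
    have hm : (π i h)⁻¹ * g i ∈ (⨅ j ∈ T, (π j).ker).map (π i) := this ▸ Subgroup.mem_top _
    obtain ⟨k, hk, hk'⟩ := hm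
    refine ⟨h * k, fun j hj => ?_⟩
    rcases Finset.mem_insert.1 hj with rfl | hj
    · rw [map_mul, hk']; simp
    · have : π j k = 1 := by
        simp only [SetLike.mem_coe, Subgroup.mem_iInf] at hk
        exact hk j hj
      rw [map_mul, this, hh j hj, mul_one]

/-! ### A small nontrivial irreducible representation -/

/-- A nonzero invariant subspace without nonzero fixed vectors contains a minimal one, which gives a
nontrivial irreducible matrix representation. -/
theorem exists_irreducible_ne_one {A V : Type*} [Group A] [AddCommGroup V] [Module ℂ V]
    [FiniteDimensional ℂ V] (P : A →* Module.End ℂ V) (V₀ : Submodule ℂ V) (hV₀ : V₀ ≠ ⊥)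
    (hinv : ∀ g, ∀ v ∈ V₀, P g v ∈ V₀) (hfix : ∀ v ∈ V₀, (∀ g, P g v = v) → v = 0) :
    ∃ d, 1 ≤ d ∧ d ≤ Module.finrank ℂ V ∧ ∃ ρ : A →* GL (Fin d) ℂ, MatIrreducible ρ ∧ ρ ≠ 1 := by
  obtain ⟨W, ⟨hW0, hWV, hWinv⟩, hmin⟩ := WellFounded.has_min
    (wellFounded_lt (α := Submodule ℂ V))
    {W | W ≠ ⊥ ∧ W ≤ V₀ ∧ ∀ g, ∀ v ∈ W, P g v ∈ W} ⟨V₀, hV₀, le_rfl, hinv⟩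
  let b := Module.finBasis ℂ W
  let R : A →* Module.End ℂ W :=
    { toFun := fun g => (P g).restrict (hWinv g)
      map_one' := by ext; simp
      map_mul' := fun g h => by ext; simp }
  let M : A →* Matrix (Fin (Module.finrank ℂ W)) (Fin (Module.finrank ℂ W)) ℂ :=
    ((LinearMap.toMatrixAlgEquiv b).toAlgHom : _ →* _).comp R
  have hM : ∀ g w, (M g).mulVec (b.equivFun w) = b.equivFun (R g w) := fun g w =>
    LinearMap.toMatrix_mulVec_repr b b (R g) w
  have hdim : 1 ≤ Module.finrank ℂ W := Submodule.one_le_finrank_iff.2 hW0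
  refine ⟨_, hdim, Submodule.finrank_le W, M.toHomUnits, ?_, ?_⟩
  · intro U hU
    set U' : Submodule ℂ V := (U.comap b.equivFun.toLinearMap).map W.subtype with hU'
    have hU'W : U' ≤ W := Submodule.map_subtype_le _ _
    by_cases h0 : U' = ⊥
    · left
      rw [eq_bot_iff]
      intro u hu
      have : ((b.equivFun.symm u : W) : V) ∈ U' := by
        refine ⟨b.equivFun.symm u, ?_, rfl⟩
        change b.equivFun (b.equivFun.symm u) ∈ U
        rwa [LinearEquiv.apply_symm_apply]
      rw [h0, Submodule.mem_bot, Submodule.coe_eq_zero, LinearEquiv.map_eq_zero_iff] at this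
      exact this
    · right
      have hU'inv : ∀ g, ∀ v ∈ U', P g v ∈ U' := by
        rintro g _ ⟨w, hw, rfl⟩
        refine ⟨R g w, ?_, rfl⟩
        have := hU g _ hw
        rw [MonoidHom.coe_toHomUnits] at this
        have e := hM g w
        change b.equivFun (R g w) ∈ U
        rw [← e]
        exact this
      have hEq : U' = W := by
        by_contra hne
        exact hmin U' ⟨h0, hU'W.trans hWV, hU'inv⟩ (lt_of_le_of_ne hU'W hne)
      rw [eq_top_iff]
      rintro u -
      have : ((b.equivFun.symm u : W) : V) ∈ U' := hEq.ge (b.equivFun.symm u).2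
      obtain ⟨w, hw, hw'⟩ := this
      have hww : w = b.equivFun.symm u := Subtype.ext hw'
      rw [hww] at hw
      have hw2 : b.equivFun (b.equivFun.symm u) ∈ U := hw
      rwa [LinearEquiv.apply_symm_apply] at hw2
  · intro h1
    obtain ⟨w, hw, hw0⟩ := Submodule.exists_mem_ne_zero_of_ne_bot hW0
    refine hw0 (hfix w (hWV hw) fun g => ?_)
    have h2 : M g = 1 := by
      rw [← MonoidHom.coe_toHomUnits, h1]; rfl
    have h3 := hM g ⟨w, hw⟩
    rw [h2, Matrix.one_mulVec] at h3
    exact (congrArg Subtype.val (b.equivFun.injective h3)).symm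

/-- A nontrivial irreducible representation of dimension at most `n` found inside the sum-zero part
of the permutation representation on `ℂⁿ`. -/
theorem exists_alternating_irreducible {n : ℕ} (hn : 3 ≤ n) :
    ∃ d, 1 ≤ d ∧ d ≤ n ∧ ∃ ρ : alternatingGroup (Fin n) →* GL (Fin d) ℂ,
      MatIrreducible ρ ∧ ρ ≠ 1 := by
  let P : alternatingGroup (Fin n) →* Module.End ℂ (Fin n → ℂ) :=
    { toFun := fun g => LinearMap.funLeft ℂ ℂ (g : Equiv.Perm (Fin n)).symm
      map_one' := rfl
      map_mul' := fun g h => by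
        apply LinearMap.ext; intro v; ext i
        simp [LinearMap.funLeft_apply, Equiv.Perm.mul_def] }
  have hP : ∀ g v i, P g v i = v ((g : Equiv.Perm (Fin n)).symm i) := fun _ _ _ => rfl
  let s : (Fin n → ℂ) →ₗ[ℂ] ℂ := ∑ i, LinearMap.proj i
  have hs : ∀ v, s v = ∑ i, v i := fun v => by simp [s]
  have := exists_irreducible_ne_one P (LinearMap.ker s) ?_ ?_ ?_
  · simpa using this
  · intro hbot
    let v : Fin n → ℂ := Pi.single ⟨0, by omega⟩ 1 - Pi.single ⟨1, by omega⟩ 1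
    have hv : v ∈ LinearMap.ker s := by
      simp [LinearMap.mem_ker, hs, v]
    rw [hbot, Submodule.mem_bot] at hv
    have := congrFun hv ⟨0, by omega⟩
    simp [v] at this
  · intro g v hv
    rw [LinearMap.mem_ker, hs] at hv ⊢
    simp only [hP]
    rw [Equiv.sum_comp (g : Equiv.Perm (Fin n)).symm v, hv]
  · intro v hv hfix
    -- a 3-cycle carries any coordinate to any other, so a fixed vector is constant
    have hconst : ∀ i j, v i = v j := by
      intro i j
      by_cases hij : i = j
      · rw [hij]
      obtain ⟨k, hki, hkj⟩ : ∃ k : Fin n, k ≠ i ∧ k ≠ j := by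
        have : ({i, j} : Finset (Fin n)).card < (Finset.univ : Finset (Fin n)).card :=
          lt_of_le_of_lt Finset.card_le_two (by simp; omega)
        obtain ⟨k, -, hk⟩ := Finset.exists_mem_notMem_of_card_lt_card this
        exact ⟨k, by simp_all⟩
      have hσ : Equiv.swap j k * Equiv.swap i j ∈ alternatingGroup (Fin n) := by
        simp [Equiv.Perm.mem_alternatingGroup, Equiv.Perm.sign_swap hij,
          Equiv.Perm.sign_swap hkj.symm]
      have h1 := congrFun (hfix ⟨_, hσ⟩) i
      rw [hP] at h1
      rw [← h1]
      congr 1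
      rw [Equiv.symm_apply_eq]
      simp [Equiv.swap_apply_of_ne_of_ne hij hki.symm]
    rw [LinearMap.mem_ker, hs] at hv
    ext i
    rw [Finset.sum_congr rfl fun j _ => hconst j i] at hv
    simp at hv
    rcases hv with hv | hv
    · omega
    · exact hv

/-! ### Growth of the factorial -/

open Filter Topology in
theorem not_factorial_le (c b : ℝ) :
    ¬ ∀ n : ℕ, 5 ≤ n → ((n.factorial / 2 : ℕ) : ℝ) ≤ c * (n : ℝ) ^ b := by
  intro h
  have h1 : Tendsto (fun n : ℕ => ((n : ℝ) ^ b * Real.exp (-1 * n)) *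
      (Real.exp 1 ^ n / n.factorial)) atTop (𝓝 (0 * 0)) :=
    ((tendsto_rpow_mul_exp_neg_mul_atTop_nhds_zero b 1 one_pos).comp
      tendsto_natCast_atTop_atTop).mul (FloorSemiring.tendsto_pow_div_factorial_atTop _)
  have h2 : Tendsto (fun n : ℕ => c * (((n : ℝ) ^ b * Real.exp (-1 * n)) *
      (Real.exp 1 ^ n / n.factorial))) atTop (𝓝 (c * (0 * 0))) := h1.const_mul c
  rw [mul_zero, mul_zero] at h2
  obtain ⟨n, hn, hn5⟩ := ((h2.eventually (gt_mem_nhds (show (0 : ℝ) < 1 / 2 by norm_num))).and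
    (eventually_ge_atTop 5)).exists
  have hfac : (0 : ℝ) < n.factorial := by exact_mod_cast n.factorial_pos
  have e : c * (((n : ℝ) ^ b * Real.exp (-1 * n)) * (Real.exp 1 ^ n / n.factorial))
      = c * (n : ℝ) ^ b / n.factorial := by
    have : Real.exp (-1 * n) * Real.exp 1 ^ n = 1 := by
      rw [← Real.exp_nat_mul, ← Real.exp_add]; simp
    linear_combination (c * (n : ℝ) ^ b / n.factorial) * this
  rw [e, div_lt_iff₀ hfac] at hn
  have h3 := h n hn5
  rw [Nat.cast_div (Nat.dvd_factorial two_pos (by omega)) (by norm_num)] at h3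
  push_cast at h3
  linarith

/-! ### The group `G15` -/

theorem topGenLE_G15 : TopGenLE G15 3 := by
  classical
  have h2 : ∀ n : {n : ℕ // 5 ≤ n}, ∃ x y : alternatingGroup (Fin n.1),
      Subgroup.closure {x, y} = ⊤ := fun n =>
    alternatingGroup_two_generated (by have := n.2; simp; omega)
  choose x y hxy using h2
  have hcard : ∀ n : {n : ℕ // 5 ≤ n},
      Nat.card (alternatingGroup (Fin n.1)) = n.1.factorial / 2 := fun n => by
    have : Nontrivial (Fin n.1) := Fin.nontrivial_iff_two_le.2 (by have := n.2; omega)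
    simpa using nat_card_alternatingGroup (α := Fin n.1)
  have he : ∀ n : {n : ℕ // 5 ≤ n},
      Nonempty (Fin (n.1.factorial / 2) ≃ alternatingGroup (Fin n.1)) := fun n =>
    ⟨(finCongr (hcard n).symm).trans (Finite.equivFin _).symm⟩
  let e := fun n => (he n).some
  let X : G15 := fun n _ => x n
  let Y : G15 := fun n _ => y n
  let Z : G15 := fun n k => e n k
  refine ⟨{X, Y, Z}, Finset.card_le_three, ?_⟩
  set H : Subgroup G15 := Subgroup.closure (({X, Y, Z} : Finset G15) : Set G15) with hH
  have hX : X ∈ H := Subgroup.subset_closure (by simp)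
  have hY : Y ∈ H := Subgroup.subset_closure (by simp)
  have hZ : Z ∈ H := Subgroup.subset_closure (by simp)
  let I := Σ n : {n : ℕ // 5 ≤ n}, Fin (n.1.factorial / 2)
  let π : ∀ i : I, H →* alternatingGroup (Fin i.1.1) := fun i =>
    { toFun := fun h => h.1 i.1 i.2
      map_one' := rfl
      map_mul' := fun _ _ => rfl }
  have key : ∀ (T : Finset I) (g : ∀ i : I, alternatingGroup (Fin i.1.1)),
      ∃ h, ∀ i ∈ T, π i h = g i := by
    refine exists_eq_on_finset (fun i => ?_) (fun i => ?_) π (fun i => ?_) ?_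
    · exact alternatingGroup.isSimpleGroup (by simpa using i.1.2)
    · exact commutator_alternatingGroup_eq_top (by simpa using i.1.2)
    · rw [← MonoidHom.range_eq_top, eq_top_iff, ← hxy i.1, Subgroup.closure_le]
      rintro _ (rfl | rfl)
      · exact ⟨⟨X, hX⟩, rfl⟩
      · exact ⟨⟨Y, hY⟩, rfl⟩
    · rintro ⟨n, k⟩ ⟨m, l⟩ hne φ
      by_contra! hφ
      have hnm : n = m := by
        have h1 := Nat.card_congr φ.toEquiv
        simp only [hcard] at h1
        have hn2 := Nat.div_mul_cancel
          (Nat.dvd_factorial two_pos (by have := n.2; omega : 2 ≤ n.1))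
        have hm2 := Nat.div_mul_cancel
          (Nat.dvd_factorial two_pos (by have := m.2; omega : 2 ≤ m.1))
        have h3 : n.1.factorial = m.1.factorial := by rw [← hn2, ← hm2, h1]
        exact Subtype.ext ((Nat.factorial_inj (by have := n.2; omega)).1 h3)
      subst hnm
      have hφX : x n = φ (x n) := hφ ⟨X, hX⟩
      have hφY : y n = φ (y n) := hφ ⟨Y, hY⟩
      have hφZ : e n k = φ (e n l) := hφ ⟨Z, hZ⟩
      have hid : φ.toMonoidHom = MonoidHom.id _ := by
        refine MonoidHom.eq_of_eqOn_dense (hxy n) ?_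
        rintro _ (rfl | rfl)
        · exact hφX.symm
        · exact hφY.symm
      have h3 : φ (e n l) = e n l := DFunLike.congr_fun hid (e n l)
      rw [h3] at hφZ
      exact hne (by rw [(e n).injective hφZ])
  rw [dense_iff_inter_open]
  rintro U hU ⟨g, hg⟩
  obtain ⟨T, u, hu, hTU⟩ := isOpen_pi_iff.1 hU g hg
  obtain ⟨h, hh⟩ := key (T.sigma fun _ => Finset.univ) fun i => g i.1 i.2
  refine ⟨h.1, hTU fun n hn => ?_, h.2⟩
  have : h.1 n = g n := funext fun k => 
    hh ⟨n, k⟩ (Finset.mem_sigma.2 ⟨hn, Finset.mem_univ k⟩)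
  rw [this]
  exact (hu n hn).2

/-- The kernel of a class of representations: conjugate representations have equal kernels. -/
def IrrepClasses.ker {G : Type*} [Group G] [TopologicalSpace G] {d : ℕ} :
    IrrepClasses G d → Subgroup G :=
  Quot.lift (fun ρ => ρ.1.ker) (by
    rintro ρ σ ⟨T, hT⟩
    ext g
    simp only [MonoidHom.mem_ker]
    rw [hT g, mul_inv_eq_one, mul_eq_left])

/-- The pullbacks of `ρ` along the `n!/2` projections of `G15` onto `Alt(n)` have pairwise distinct
kernels, so they lie in distinct classes. -/
theorem le_rCount (n : {n : ℕ // 5 ≤ n}) {d : ℕ} [Finite (IrrepClasses G15 d)]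
    (ρ : alternatingGroup (Fin n.1) →* GL (Fin d) ℂ) (hρ : MatIrreducible ρ) (h1 : ρ ≠ 1) :
    n.1.factorial / 2 ≤ rCount G15 d := by
  classical
  let p : Fin (n.1.factorial / 2) → G15 →* alternatingGroup (Fin n.1) := fun k =>
    { toFun := fun g => g n k
      map_one' := rfl
      map_mul' := fun _ _ => rfl }
  have hpc : ∀ k, Continuous (p k) := fun k =>
    (continuous_apply k).comp (continuous_apply n)
  have hp : ∀ k a, ∃ g : G15, p k g = a ∧ ∀ l, l ≠ k → p l g = 1 := by
    intro k a
    refine ⟨Pi.mulSingle n (Pi.mulSingle k a), ?_, fun l hl => ?_⟩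
    · change (Pi.mulSingle n (Pi.mulSingle k a) : G15) n k = a
      simp
    · change (Pi.mulSingle n (Pi.mulSingle k a) : G15) n l = 1
      simp [hl]
  let F : Fin (n.1.factorial / 2) → ContIrrep G15 d := fun k =>
    ⟨ρ.comp (p k), (continuous_of_discreteTopology (f := ρ)).comp (hpc k), fun W hW => hρ W fun a v hv => by
        obtain ⟨g, rfl, -⟩ := hp k a
        exact hW g v hv⟩
  let q : Fin (n.1.factorial / 2) → IrrepClasses G15 d := fun k => Quot.mk _ (F k)
  have hq : Function.Injective q := by
    intro k l hkl
    by_contra hne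
    have hker : (ρ.comp (p k)).ker = (ρ.comp (p l)).ker := congrArg IrrepClasses.ker hkl
    apply h1
    ext1 a
    obtain ⟨g, rfl, hg⟩ := hp k a
    have : g ∈ (ρ.comp (p l)).ker := by
      rw [MonoidHom.mem_ker, MonoidHom.comp_apply, hg l (Ne.symm hne), map_one]
    rw [← hker] at this
    exact this
  simpa [rCount] using Nat.card_le_card_of_injective q hq

theorem not_hasPRG_G15 : ¬ HasPRG G15 := by
  rintro ⟨hfin, c, b, hcb⟩
  refine not_factorial_le c b fun n hn => ?_
  refine le_trans ?_ (hcb n (by omega))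
  obtain ⟨d, hd1, hdn, ρ, hρ, hρ1⟩ := exists_alternating_irreducible (n := n) (by omega)
  have := hfin d
  have h1 := le_rCount ⟨n, hn⟩ ρ hρ hρ1
  have h2 : rCount G15 d ≤ RCount G15 n :=
    Finset.single_le_sum (f := fun k => rCount G15 k) (fun _ _ => Nat.zero_le _)
      (Finset.mem_Icc.2 ⟨hd1, hdn⟩)
  exact_mod_cast h1.trans h2

/-- The semisimple profinite group
`G = ∏_{n ≥ 5} Alt(n)^{n!/2}` is topologically generated by `3` elements but
does not have polynomial representation growth. -/
theorem stmt15 : TopGenLE G15 3 ∧ ¬ HasPRG G15 := by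
  exact ⟨topGenLE_G15, not_hasPRG_G15⟩
end
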